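/- Let ρ₀ : Γ → PSL(2,ℝ) be convex cocompact with limit set L, let h be a homeomorphism of S¹ equal to the identity on L with ρ₁ = h ρ₀ h⁻¹ taking values in Diff(S¹), and let ω₂ be a smooth volume form on C such that the invariance identity ω₂(ρ₁(γ)(x), ρ₁(γ)(y))·ρ₁(γ)'(x)·ρ₁(γ)'(y) = ω₂(x,y) holds for every γ ∈ Γ and every (x,y) ∈ (L×S¹ ∪ S¹×L) \ Δ. Then there exists a continuous volume form ω on C invariant under ρ₁(γ) for every γ ∈ Γ and equal to ω₂ on (L×S¹ ∪ S¹×L) \ Δ. -/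

import Mathlib

/-!
The form `ω` is obtained by averaging `ω₂` over the group. Off `L` the group `ρ₁(Γ)` acts properly
and cocompactly, so there is a continuous weight `χ ≥ 0` on the circle, supported in a compact set
`K` disjoint from `L`, such that `∑ χ(γ x)` is a locally finite positive sum for `x ∉ L`. Put
`ω(x, y) = ∑ χ(γ x) (γ^* ω₂)(x, y) / ∑ χ(γ x)` for `x ∉ L` and `ω(x, y) = ω₂(x, y)` for `x ∈ L`.
Invariance, positivity and the equality with `ω₂` over `L × S¹ ∪ S¹ × L` are immediate
(`exists_invariant_form`). The point is continuity at `(x₀, y₀)` with `x₀ ∈ L`: the pull-backs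
`(γ^* ω₂)(x, y)` with `γ x ∈ K` must tend to `ω₂(x₀, y₀)` uniformly in `γ`
(`pullForm_near_limit`). Using the invariance of `ω₂` at points `x'`, `y'` of `L`, the derivatives
of `γ` are eliminated (`pullForm_eq_cross`):
`(γ^* ω₂)(x, y) = ω₂(γx, γy) ω₂(γx', γy') / (ω₂(γx, γy') ω₂(γx', γy)) * (ω₂(x, y') ω₂(x', y) / ω₂(x', y'))`.
By the convergence dynamics, `γy` and `γy'` tend to the attracting point `a`, while `γx` stays in `K`
and `x' = γ⁻¹ p`, with `p ∈ L` different from `a`, tends to `x₀`. The first factor tends to `1` and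
the second one to `ω₂(x₀, y₀)`.

Two dynamical facts are needed (`IsConvergenceAction`, `IsCocompactOff`). They are invariant under
conjugation by `h`, which is the identity on `L` (`dynamics_conj`), so they are proved for `ρ₀`
(`dynamics_of_convexCocompact`). Proper discontinuity on `ℍ` makes the matrices diverge, and
normalized diverging matrices accumulate on matrices of rank one, which gives north-south dynamics
(`matrix_dynamics`). For cocompactness, the closed set of the directions that no element of the group
contracts meets every orbit off `L`. It is disjoint from `L`: by minimality, every point of `L` is a
direction contracted by a lot relative to the norm of the matrix (`subset_contractedSet`), and
viewing points of `ℍ` as quadratic forms, a segment inside the convex cocompact set produces an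
element that really contracts it (`exists_contracting`).
-/

noncomputable section

open Real Set Function MeasureTheory
open scoped Classical

/-- The circle, modeled as the real projective line `ℝP¹`. -/
abbrev RP1 : Type := Projectivization ℝ (Fin 2 → ℝ)

instance : TopologicalSpace RP1 :=
  inferInstanceAs (TopologicalSpace (Quotient (projectivizationSetoid ℝ (Fin 2 → ℝ))))

instance : MeasurableSpace RP1 := borel RP1
instance : BorelSpace RP1 := ⟨rfl⟩

lemma cossin_ne_zero (t : ℝ) : ![Real.cos (π * t), Real.sin (π * t)] ≠ 0 := by
  intro h
  have h0 : Real.cos (π * t) = 0 := by simpa using congrFun h 0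
  have h1 : Real.sin (π * t) = 0 := by simpa using congrFun h 1
  have h2 := Real.sin_sq_add_cos_sq (π * t)
  rw [h0, h1] at h2
  norm_num at h2

/-- The standard (angular) parametrization `ℝ → ℝP¹`; it has period `1` and realizes
the identification `S¹ = ℝ/ℤ ≃ ℝP¹`. -/
def para (t : ℝ) : RP1 :=
  Projectivization.mk ℝ ![Real.cos (π * t), Real.sin (π * t)] (cossin_ne_zero t)

/-- `F : ℝ → ℝ` is a lift of the circle map `f` through the angular parametrization. -/
def IsLift (F : ℝ → ℝ) (f : RP1 → RP1) : Prop :=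
  ∀ t : ℝ, f (para t) = para (F t)

/-- `f` is a `C^k` diffeomorphism of the circle: it admits a `C^k` lift of degree `±1`
with nowhere vanishing derivative. -/
def IsCircleDiffeo (k : ℕ∞) (f : RP1 → RP1) : Prop :=
  ∃ F : ℝ → ℝ, IsLift F f ∧ ContDiff ℝ k F ∧ (∀ t : ℝ, deriv F t ≠ 0) ∧
    ((∀ t : ℝ, F (t + 1) = F t + 1) ∨ (∀ t : ℝ, F (t + 1) = F t - 1))

/-- `f` is a real-analytic diffeomorphism of the circle. -/
def IsAnalyticCircleDiffeo (f : RP1 → RP1) : Prop :=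
  ∃ F : ℝ → ℝ, IsLift F f ∧ AnalyticOnNhd ℝ F Set.univ ∧ (∀ t : ℝ, deriv F t ≠ 0) ∧
    ((∀ t : ℝ, F (t + 1) = F t + 1) ∨ (∀ t : ℝ, F (t + 1) = F t - 1))

/-- The derivative of a circle map at a point, computed in the angular coordinate via a
differentiable lift. (Any two differentiable lifts differ by an integer constant, and the
derivative of a lift is `1`-periodic, so this does not depend on any choice.) -/
def circleDeriv (f : RP1 → RP1) (x : RP1) : ℝ :=
  if h : ∃ F : ℝ → ℝ, IsLift F f ∧ Differentiable ℝ F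
  then deriv h.choose (Function.invFun para x) else 0

/-- The `n`-th derivative of a smooth circle map at a point, in the angular coordinate. -/
def circleDerivN (n : ℕ) (f : RP1 → RP1) (x : RP1) : ℝ :=
  if h : ∃ F : ℝ → ℝ, IsLift F f ∧ ContDiff ℝ (⊤ : ℕ∞) F
  then iteratedDeriv n h.choose (Function.invFun para x) else 0

/-- The expression of a function on `S¹ × S¹` in the angular coordinates. -/
def chartDensity (ω : RP1 → RP1 → ℝ) : ℝ × ℝ → ℝ := fun q => ω (para q.1) (para q.2)

/-- The lift to `ℝ × ℝ` of the complement of the diagonal in `S¹ × S¹`. -/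
def offDiag2 : Set (ℝ × ℝ) := {q : ℝ × ℝ | para q.1 ≠ para q.2}

/-- A `C^k` volume form on the cylinder `C = S¹ × S¹ \ Δ`: a positive function of class
`C^k` (in the angular coordinates) off the diagonal. -/
def IsVolumeForm (k : ℕ∞) (ω : RP1 → RP1 → ℝ) : Prop :=
  (∀ x y : RP1, x ≠ y → 0 < ω x y) ∧ ContDiffOn ℝ k (chartDensity ω) offDiag2

/-- A real-analytic volume form on the cylinder `C = S¹ × S¹ \ Δ`. -/
def IsAnalyticVolumeForm (ω : RP1 → RP1 → ℝ) : Prop :=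
  (∀ x y : RP1, x ≠ y → 0 < ω x y) ∧ AnalyticOnNhd ℝ (chartDensity ω) offDiag2

/-- The circle diffeomorphism `f` preserves the volume form `ω` on the cylinder:
`ω (f x) (f y) · f'(x) · f'(y) = ω x y` for all `x ≠ y`. -/
def PreservesForm (f : RP1 → RP1) (ω : RP1 → RP1 → ℝ) : Prop :=
  ∀ x y : RP1, x ≠ y →
    ω (f x) (f y) * circleDeriv f x * circleDeriv f y = ω x y

abbrev SL2 : Type := Matrix.SpecialLinearGroup (Fin 2) ℝ

/-- The projective action of `SL(2,ℝ)` on `ℝP¹`; its image in the maps of `ℝP¹`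
is the group `PSL(2,ℝ)`. -/
def mobius (M : SL2) : RP1 → RP1 :=
  Projectivization.map (Matrix.SpecialLinearGroup.toLin' M : (Fin 2 → ℝ) →ₗ[ℝ] Fin 2 → ℝ)
    (Matrix.SpecialLinearGroup.toLin' M).injective

/-- `f` is an element of `PSL(2,ℝ)`, viewed as a self-map of the circle `ℝP¹`. -/
def IsMobius (f : RP1 → RP1) : Prop := ∃ M : SL2, f = mobius M

lemma rot_det (α : ℝ) :
    Matrix.det !![Real.cos (π * α), -Real.sin (π * α); Real.sin (π * α), Real.cos (π * α)] = 1 := by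
  rw [Matrix.det_fin_two_of]
  nlinarith [Real.sin_sq_add_cos_sq (π * α)]

/-- The rotation of angle `α` (in the angular coordinate of total length `1`), as an
element of `SL(2,ℝ)`: `mobius (rotSL α)` is the rotation `para t ↦ para (t + α)`. -/
def rotSL (α : ℝ) : SL2 :=
  ⟨!![Real.cos (π * α), -Real.sin (π * α); Real.sin (π * α), Real.cos (π * α)], rot_det α⟩

section Reps

variable {Γ : Type*} [Group Γ]

/-- The action `ρ` has no finite orbit on the circle. -/
def HasNoFiniteOrbit (ρ : Γ →* Equiv.Perm RP1) : Prop :=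
  ∀ x : RP1, (Set.range fun γ : Γ => ρ γ x).Infinite

/-- The action `ρ` has a dense orbit on the circle. -/
def HasDenseOrbit (ρ : Γ →* Equiv.Perm RP1) : Prop :=
  ∃ x : RP1, Dense (Set.range fun γ : Γ => ρ γ x)

/-- `L` is the limit set of the action `ρ`: the minimal nonempty closed invariant subset. -/
def IsLimitSet (ρ : Γ →* Equiv.Perm RP1) (L : Set RP1) : Prop :=
  L.Nonempty ∧ IsClosed L ∧ (∀ γ : Γ, (ρ γ) '' L = L) ∧
    ∀ L' : Set RP1, L'.Nonempty → IsClosed L' → (∀ γ : Γ, (ρ γ) '' L' = L') → L ⊆ L'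

/-- `ρ` is area-preserving: the diagonal action on the cylinder preserves a smooth
volume form. -/
def AreaPreserving (ρ : Γ →* Equiv.Perm RP1) : Prop :=
  ∃ ω : RP1 → RP1 → ℝ, IsVolumeForm (⊤ : ℕ∞) ω ∧ ∀ γ : Γ, PreservesForm (ρ γ) ω

/-- `ρ` is topologically Fuchsian: conjugate to a subgroup of `PSL(2,ℝ)` by a
homeomorphism of the circle. -/
def TopologicallyFuchsian (ρ : Γ →* Equiv.Perm RP1) : Prop :=
  ∃ h : RP1 ≃ₜ RP1, ∀ γ : Γ, IsMobius fun x => h.symm (ρ γ (h x))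

/-- `ρ` is differentially Fuchsian: conjugate to a subgroup of `PSL(2,ℝ)` by a `C^∞`
diffeomorphism of the circle. -/
def DifferentiallyFuchsian (ρ : Γ →* Equiv.Perm RP1) : Prop :=
  ∃ h g : RP1 → RP1, IsCircleDiffeo (⊤ : ℕ∞) h ∧ IsCircleDiffeo (⊤ : ℕ∞) g ∧
    (∀ x, g (h x) = x) ∧ (∀ x, h (g x) = x) ∧
    ∀ γ : Γ, IsMobius fun x => g (ρ γ (h x))

/-- `ρ` is analytically Fuchsian: conjugate to a subgroup of `PSL(2,ℝ)` by a real-analytic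
diffeomorphism of the circle. -/
def AnalyticallyFuchsian (ρ : Γ →* Equiv.Perm RP1) : Prop :=
  ∃ h g : RP1 → RP1, IsAnalyticCircleDiffeo h ∧ IsAnalyticCircleDiffeo g ∧
    (∀ x, g (h x) = x) ∧ (∀ x, h (g x) = x) ∧
    ∀ γ : Γ, IsMobius fun x => g (ρ γ (h x))

end Reps

/-- The "Lebesgue" measure on the circle, transported from `[0,1)` by the angular
parametrization. -/
def circleMeasure : Measure RP1 :=
  Measure.map para (volume.restrict (Set.Ico (0 : ℝ) 1))

/-- The measure on `S¹ × S¹` with density `ω` with respect to Lebesgue measure. -/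
def volumeFormMeasure (ω : RP1 → RP1 → ℝ) : Measure (RP1 × RP1) :=
  (circleMeasure.prod circleMeasure).withDensity fun q => ENNReal.ofReal (ω q.1 q.2)

-- extras appended to base
section Extra

open scoped UpperHalfPlane

/-- The affine chart `ℝ → ℝP¹`, `u ↦ [u : 1]`, realizing `S¹ = ℝ ∪ {∞}`. -/
def aff (u : ℝ) : RP1 :=
  Projectivization.mk ℝ ![u, (1 : ℝ)] (by
    intro h
    simpa using congrFun h 1)

/-- The curvature `K = (2/ω) ∂²(log ω)/∂x∂y` (in the angular coordinates) of the Lorentz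
metric associated to the volume form `ω` on the cylinder. -/
def curvature (ω : RP1 → RP1 → ℝ) (x y : RP1) : ℝ :=
  (2 / ω x y) *
    deriv (fun t : ℝ =>
        deriv (fun s : ℝ => Real.log (ω (para t) (para s))) (Function.invFun para y))
      (Function.invFun para x)

/-- The Schwarzian derivative of `f` (with respect to the standard projective structure of
`ℝP¹`) vanishes at `x`: `f` agrees to third order at `x` with some element of `PSL(2,ℝ)`. -/
def SchwarzianVanishesAt (f : RP1 → RP1) (x : RP1) : Prop :=
  ∃ M : SL2, f x = mobius M x ∧
    circleDerivN 1 f x = circleDerivN 1 (mobius M) x ∧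
    circleDerivN 2 f x = circleDerivN 2 (mobius M) x ∧
    circleDerivN 3 f x = circleDerivN 3 (mobius M) x

/-- The action on the hyperbolic plane of an element of `PSL(2,ℝ)`, given as a self-map of
the circle. (Well defined: matrices `±M` induce the same map on `ℝP¹` and on `ℍ`.) -/
def mobiusHAct (f : RP1 → RP1) : ℍ → ℍ :=
  if h : ∃ M : SL2, f = mobius M then fun z => h.choose • z else id

/-- A subset of the hyperbolic plane is (geodesically) convex iff it contains every point
lying between two of its points. -/
def HypConvex (C : Set ℍ) : Prop :=
  ∀ x ∈ C, ∀ y ∈ C, ∀ z : ℍ, dist x z + dist z y = dist x y → z ∈ C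

/-- A Cantor subset of the circle: nonempty, perfect, with empty interior. -/
def IsCantorSet (L : Set RP1) : Prop :=
  L.Nonempty ∧ Perfect L ∧ interior L = ∅

/-- `ρ` is a convex cocompact representation in `PSL(2,ℝ)`: it is injective, takes values in
`PSL(2,ℝ)`, is discrete (acts properly discontinuously on `ℍ`), its limit set is a Cantor
set, and it acts cocompactly on some nonempty closed convex invariant subset of `ℍ`
(equivalently, on the convex hull of its limit set). -/
def IsConvexCocompact {Γ : Type*} [Group Γ] (ρ : Γ →* Equiv.Perm RP1) : Prop :=
  Function.Injective ρ ∧ (∀ γ : Γ, IsMobius (ρ γ)) ∧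
  (∀ K : Set ℍ, IsCompact K →
    {γ : Γ | ((mobiusHAct (ρ γ) '' K) ∩ K).Nonempty}.Finite) ∧
  (∃ L : Set RP1, IsLimitSet ρ L) ∧
  (∀ L : Set RP1, IsLimitSet ρ L → IsCantorSet L) ∧
  ∃ C : Set ℍ, C.Nonempty ∧ IsClosed C ∧ HypConvex C ∧
    (∀ γ : Γ, mobiusHAct (ρ γ) '' C = C) ∧
    ∃ K : Set ℍ, IsCompact K ∧ C ⊆ ⋃ γ : Γ, mobiusHAct (ρ γ) '' K

/-- Two circle maps are `ε`-close in the `C¹` topology. -/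
def C1Close (f g : RP1 → RP1) (ε : ℝ) : Prop :=
  ∃ F G : ℝ → ℝ, IsLift F f ∧ IsLift G g ∧ ContDiff ℝ 1 F ∧ ContDiff ℝ 1 G ∧
    ∀ t : ℝ, |F t - G t| ≤ ε ∧ |deriv F t - deriv G t| ≤ ε

/-- `ρ` is spectrally Möbius-like: every nontrivial element has at most two fixed points,
and at a pair of fixed points `N, S` the derivatives satisfy `f'(N)·f'(S) = 1`, `f'(N) ≠ 1`. -/
def SpectrallyMobiusLike {Γ : Type*} [Group Γ] (ρ : Γ →* Equiv.Perm RP1) : Prop :=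
  ∀ γ : Γ, ρ γ ≠ 1 →
    {x : RP1 | ρ γ x = x}.encard ≤ 2 ∧
    ∀ N S : RP1, N ≠ S → {x : RP1 | ρ γ x = x} = {N, S} →
      circleDeriv (ρ γ) N * circleDeriv (ρ γ) S = 1 ∧ circleDeriv (ρ γ) N ≠ 1

end Extra

open Filter Topology

/-! ### The topology of the projective line -/

lemma vec_ne_zero_iff (v : Fin 2 → ℝ) : v ≠ 0 ↔ 0 < v 0 ^ 2 + v 1 ^ 2 := by
  constructor
  · intro hv
    by_contra hle
    apply hv
    have h0 : v 0 = 0 := by nlinarith [sq_nonneg (v 0), sq_nonneg (v 1)]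
    have h1 : v 1 = 0 := by nlinarith [sq_nonneg (v 0), sq_nonneg (v 1)]
    ext i
    fin_cases i
    · exact h0
    · exact h1
  · rintro h rfl
    simp at h

lemma mk_eq_iff_cross (v w : Fin 2 → ℝ) (hv : v ≠ 0) (hw : w ≠ 0) :
    (Projectivization.mk ℝ v hv : RP1) = Projectivization.mk ℝ w hw ↔ v 0 * w 1 = v 1 * w 0 := by
  rw [Projectivization.mk_eq_mk_iff']
  constructor
  · rintro ⟨a, rfl⟩
    simp only [Pi.smul_apply, smul_eq_mul]
    ring
  · intro h
    have hw' := (vec_ne_zero_iff w).1 hw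
    refine ⟨(v 0 * w 0 + v 1 * w 1) / (w 0 ^ 2 + w 1 ^ 2), ?_⟩
    ext i
    fin_cases i
    · simp only [Pi.smul_apply, smul_eq_mul, Fin.zero_eta]
      field_simp
      linear_combination (-w 1) * h
    · simp only [Pi.smul_apply, smul_eq_mul, Fin.mk_one]
      field_simp
      linear_combination (w 0) * h

lemma continuous_mk :
    Continuous fun v : {v : Fin 2 → ℝ // v ≠ 0} => (Projectivization.mk ℝ v.1 v.2 : RP1) :=
  continuous_quotient_mk'

lemma tendsto_mk {ι : Type*} {l : Filter ι} {v : ι → Fin 2 → ℝ} {v₀ : Fin 2 → ℝ}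
    (hv : ∀ i, v i ≠ 0) (hv₀ : v₀ ≠ 0) (h : Tendsto v l (𝓝 v₀)) :
    Tendsto (fun i => (Projectivization.mk ℝ (v i) (hv i) : RP1)) l
      (𝓝 (Projectivization.mk ℝ v₀ hv₀)) := by
  have h1 : Tendsto (fun i => (⟨v i, hv i⟩ : {v : Fin 2 → ℝ // v ≠ 0})) l (𝓝 ⟨v₀, hv₀⟩) := by
    rw [tendsto_subtype_rng]
    exact h
  exact (continuous_mk.tendsto _).comp h1

lemma continuous_cossin : Continuous fun t : ℝ => ![Real.cos (π * t), Real.sin (π * t)] := by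
  refine continuous_pi fun i => ?_
  fin_cases i
  · simp only [Fin.zero_eta, Matrix.cons_val_zero]
    fun_prop
  · simp only [Fin.mk_one, Matrix.cons_val_one, Matrix.cons_val_fin_one]
    fun_prop

lemma continuous_para : Continuous para :=
  continuous_iff_continuousAt.2 fun t =>
    tendsto_mk _ _ (continuous_cossin.tendsto t)

lemma para_eq_iff (s t : ℝ) : para s = para t ↔ ∃ n : ℤ, s = t + n := by
  unfold para
  rw [mk_eq_iff_cross]
  simp only [Matrix.cons_val_zero, Matrix.cons_val_one, Matrix.cons_val_fin_one]
  have e : Real.sin (π * s - π * t) = 0 ↔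
      Real.cos (π * s) * Real.sin (π * t) = Real.sin (π * s) * Real.cos (π * t) := by
    rw [Real.sin_sub]
    constructor <;> intro h <;> linarith
  rw [← e, Real.sin_eq_zero_iff]
  refine exists_congr fun n => ?_
  constructor
  · intro h
    have : π * (s - (t + n)) = 0 := by linarith
    rcases mul_eq_zero.1 this with h | h
    · exact absurd h Real.pi_ne_zero
    · linarith
  · rintro rfl
    ring

/-- Every point of `ℝP¹` has an angular coordinate in `[0,1]`. -/
lemma exists_para_Icc (x : RP1) : ∃ t ∈ Icc (0 : ℝ) 1, para t = x := by
  induction x using Projectivization.ind with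
  | h v hv =>
    set z : ℂ := ⟨v 0, v 1⟩ with hz
    have key : para (Complex.arg z / π) = Projectivization.mk ℝ v hv := by
      unfold para
      rw [mk_eq_iff_cross]
      simp only [Matrix.cons_val_zero, Matrix.cons_val_one, Matrix.cons_val_fin_one]
      rw [mul_div_cancel₀ _ Real.pi_ne_zero]
      have h0 : v 0 = ‖z‖ * Real.cos (Complex.arg z) := by rw [Complex.norm_mul_cos_arg]
      have h1 : v 1 = ‖z‖ * Real.sin (Complex.arg z) := by rw [Complex.norm_mul_sin_arg]
      rw [h0, h1]
      ring
    refine ⟨Int.fract (Complex.arg z / π), ⟨Int.fract_nonneg _, (Int.fract_lt_one _).le⟩, ?_⟩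
    rw [← key, para_eq_iff]
    refine ⟨-⌊Complex.arg z / π⌋, ?_⟩
    rw [← Int.self_sub_floor]
    push_cast
    ring

lemma para_surjective : Function.Surjective para := fun x =>
  let ⟨t, _, h⟩ := exists_para_Icc x
  ⟨t, h⟩

instance : CompactSpace RP1 := by
  refine ⟨?_⟩
  have : (univ : Set RP1) = para '' Icc 0 1 := by
    ext x
    simpa using exists_para_Icc x
  rw [this]
  exact isCompact_Icc.image continuous_para

/-- The double angle map `[v] ↦ (v₀² - v₁², 2 v₀ v₁) / |v|²`, an embedding of `ℝP¹` in the plane. -/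
def doubleAngle (x : RP1) : ℝ × ℝ :=
  Projectivization.lift (fun v : {v : Fin 2 → ℝ // v ≠ 0} =>
    ((v.1 0 ^ 2 - v.1 1 ^ 2) / (v.1 0 ^ 2 + v.1 1 ^ 2),
      2 * v.1 0 * v.1 1 / (v.1 0 ^ 2 + v.1 1 ^ 2)))
    (by
      rintro ⟨v, hv⟩ ⟨w, hw⟩ t h
      have h' : v = t • w := h
      have hw' := (vec_ne_zero_iff w).1 hw
      have ht : t ≠ 0 := by
        rintro rfl
        exact hv (by simpa using h')
      have h0 : v 0 = t * w 0 := by rw [h']; rfl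
      have h1 : v 1 = t * w 1 := by rw [h']; rfl
      have hne : (t * w 0) ^ 2 + (t * w 1) ^ 2 ≠ 0 := by
        have : (t * w 0) ^ 2 + (t * w 1) ^ 2 = t ^ 2 * (w 0 ^ 2 + w 1 ^ 2) := by ring
        rw [this]
        positivity
      simp only [Prod.mk.injEq, h0, h1]
      constructor
      · rw [div_eq_div_iff hne hw'.ne']
        ring
      · rw [div_eq_div_iff hne hw'.ne']
        ring) x

lemma doubleAngle_mk (v : Fin 2 → ℝ) (hv : v ≠ 0) :
    doubleAngle (Projectivization.mk ℝ v hv) =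
      ((v 0 ^ 2 - v 1 ^ 2) / (v 0 ^ 2 + v 1 ^ 2), 2 * v 0 * v 1 / (v 0 ^ 2 + v 1 ^ 2)) := rfl

lemma doubleAngle_para (t : ℝ) :
    doubleAngle (para t) = (Real.cos (2 * (π * t)), Real.sin (2 * (π * t))) := by
  unfold para
  rw [doubleAngle_mk]
  simp only [Matrix.cons_val_zero, Matrix.cons_val_one, Matrix.cons_val_fin_one,
    Real.cos_sq_add_sin_sq, div_one]
  rw [Real.cos_two_mul', Real.sin_two_mul]
  ring_nf

lemma doubleAngle_injective : Function.Injective doubleAngle := by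
  intro x y hxy
  obtain ⟨s, rfl⟩ := para_surjective x
  obtain ⟨t, rfl⟩ := para_surjective y
  rw [doubleAngle_para, doubleAngle_para, Prod.mk.injEq] at hxy
  obtain ⟨hc, hs⟩ := hxy
  have : Real.cos (2 * (π * s) - 2 * (π * t)) = 1 := by
    rw [Real.cos_sub, hc, hs]
    nlinarith [Real.sin_sq_add_cos_sq (2 * (π * t))]
  obtain ⟨n, hn⟩ := (Real.cos_eq_one_iff _).1 this
  rw [para_eq_iff]
  refine ⟨n, ?_⟩
  have h2 : (2 * π) * (s - (t + n)) = 0 := by linarith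
  rcases mul_eq_zero.1 h2 with h | h
  · exact absurd h (by positivity)
  · linarith

lemma continuous_doubleAngle : Continuous doubleAngle := by
  have : Continuous fun v : {v : Fin 2 → ℝ // v ≠ 0} =>
      ((v.1 0 ^ 2 - v.1 1 ^ 2) / (v.1 0 ^ 2 + v.1 1 ^ 2),
      2 * v.1 0 * v.1 1 / (v.1 0 ^ 2 + v.1 1 ^ 2)) := by
    have h0 : Continuous fun v : {v : Fin 2 → ℝ // v ≠ 0} => v.1 0 :=
      (continuous_apply 0).comp continuous_subtype_val
    have h1 : Continuous fun v : {v : Fin 2 → ℝ // v ≠ 0} => v.1 1 :=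
      (continuous_apply 1).comp continuous_subtype_val
    have hne : ∀ v : {v : Fin 2 → ℝ // v ≠ 0}, v.1 0 ^ 2 + v.1 1 ^ 2 ≠ 0 := fun v =>
      ((vec_ne_zero_iff v.1).1 v.2).ne'
    exact (((h0.pow 2).sub (h1.pow 2)).div ((h0.pow 2).add (h1.pow 2)) hne).prodMk
      (((continuous_const.mul h0).mul h1).div ((h0.pow 2).add (h1.pow 2)) hne)
  exact Continuous.quotient_lift this _

instance : T2Space RP1 := T2Space.of_injective_continuous doubleAngle_injective continuous_doubleAngle

lemma isQuotientMap_para : IsQuotientMap para := by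
  have hr : Continuous fun t : Icc (0 : ℝ) 1 => para t := continuous_para.comp continuous_subtype_val
  have hs : Function.Surjective fun t : Icc (0 : ℝ) 1 => para t := fun x =>
    let ⟨t, ht, h⟩ := exists_para_Icc x
    ⟨⟨t, ht⟩, h⟩
  have hq := hr.isClosedMap.isQuotientMap hr hs
  exact IsQuotientMap.of_comp continuous_subtype_val continuous_para hq

lemma isOpenMap_para : IsOpenMap para := by
  intro U hU
  rw [← isQuotientMap_para.isOpen_preimage]
  have : para ⁻¹' (para '' U) = ⋃ n : ℤ, (fun t : ℝ => t + n) ⁻¹' U := by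
    ext t
    simp only [mem_preimage, mem_image, mem_iUnion, para_eq_iff]
    constructor
    · rintro ⟨s, hs, n, rfl⟩
      exact ⟨n, hs⟩
    · rintro ⟨n, hn⟩
      exact ⟨_, hn, n, rfl⟩
  rw [this]
  exact isOpen_iUnion fun n => hU.preimage (by fun_prop)

/-- Continuity at a point of the circle can be tested in the angular coordinate. -/
lemma nhds_para (t : ℝ) : 𝓝 (para t) = map para (𝓝 t) :=
  le_antisymm (isOpenMap_para.nhds_le t) (continuous_para.tendsto t)

lemma isOpen_offDiag2 : IsOpen offDiag2 := by
  have : IsClosed {q : ℝ × ℝ | para q.1 = para q.2} :=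
    isClosed_eq (continuous_para.comp continuous_fst) (continuous_para.comp continuous_snd)
  exact this.isOpen_compl

/-- Volume forms are continuous on the cylinder for the product topology. -/
lemma IsVolumeForm.continuousAt {k : ℕ∞} {ω : RP1 → RP1 → ℝ} (hω : IsVolumeForm k ω)
    {x y : RP1} (hxy : x ≠ y) : Tendsto (fun q : RP1 × RP1 => ω q.1 q.2) (𝓝 (x, y)) (𝓝 (ω x y)) := by
  obtain ⟨s, rfl⟩ := para_surjective x
  obtain ⟨t, rfl⟩ := para_surjective y
  rw [nhds_prod_eq, nhds_para, nhds_para, prod_map_map_eq, tendsto_map'_iff, ← nhds_prod_eq]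
  have hc : ContinuousAt (chartDensity ω) (s, t) :=
    hω.2.continuousOn.continuousAt (isOpen_offDiag2.mem_nhds hxy)
  exact hc.tendsto

lemma IsVolumeForm.tendsto {k : ℕ∞} {ω : RP1 → RP1 → ℝ} (hω : IsVolumeForm k ω)
    {x y : RP1} (hxy : x ≠ y) {ι : Type*} {l : Filter ι} {u v : ι → RP1}
    (hu : Tendsto u l (𝓝 x)) (hv : Tendsto v l (𝓝 y)) :
    Tendsto (fun i => ω (u i) (v i)) l (𝓝 (ω x y)) :=
  (hω.continuousAt hxy).comp (hu.prodMk_nhds hv)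

lemma isVolumeForm_zero_of_continuousAt {ω : RP1 → RP1 → ℝ} (hpos : ∀ x y, x ≠ y → 0 < ω x y)
    (hc : ∀ x y, x ≠ y → Tendsto (fun q : RP1 × RP1 => ω q.1 q.2) (𝓝 (x, y)) (𝓝 (ω x y))) :
    IsVolumeForm 0 ω := by
  refine ⟨hpos, ?_⟩
  have hcont : ContinuousOn (chartDensity ω) offDiag2 := by
    intro q hq
    refine ContinuousAt.continuousWithinAt ?_
    exact (hc _ _ hq).comp (((continuous_para.tendsto _).comp (continuous_fst.tendsto q)).prodMk_nhds
      ((continuous_para.tendsto _).comp (continuous_snd.tendsto q)))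
  exact contDiffOn_zero.2 hcont

/-! ### Derivatives of circle maps -/

lemma IsLift.deriv_eq {f : RP1 → RP1} {F G : ℝ → ℝ} (hF : IsLift F f) (hG : IsLift G f)
    (hF' : Continuous F) (hG' : Continuous G) : deriv F = deriv G := by
  have hint : ∀ t, ∃ n : ℤ, F t - G t = n := by
    intro t
    obtain ⟨n, hn⟩ := (para_eq_iff _ _).1 ((hF t).symm.trans (hG t))
    exact ⟨n, by linarith⟩
  choose n hn using hint
  have hnc : Continuous n := by
    have h1 : Continuous fun t => ((n t : ℤ) : ℝ) := by
      simp only [← hn]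
      exact hF'.sub hG'
    exact Int.isClosedEmbedding_coe_real.isEmbedding.continuous_iff.2 h1
  have hconst : ∀ t, n t = n 0 := fun t =>
    isPreconnected_univ.constant hnc.continuousOn (mem_univ _) (mem_univ _)
  have : F = fun t => G t + (n 0 : ℝ) := by
    ext t
    have := hn t
    rw [hconst t] at this
    linarith
  rw [this]
  ext t
  exact deriv_add_const _

lemma circleDeriv_para {f : RP1 → RP1} {F : ℝ → ℝ} (hF : IsLift F f) (hF' : Differentiable ℝ F)
    (t : ℝ) : circleDeriv f (para t) = deriv F t := by
  have hex : ∃ F : ℝ → ℝ, IsLift F f ∧ Differentiable ℝ F := ⟨F, hF, hF'⟩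
  unfold circleDeriv
  rw [dif_pos hex]
  obtain ⟨h1, h2⟩ := hex.choose_spec
  rw [IsLift.deriv_eq h1 hF h2.continuous hF'.continuous]
  obtain ⟨n, hn⟩ := (para_eq_iff _ _).1 (Function.invFun_eq (para_surjective (para t)))
  -- translating a lift by an integer in the source gives another lift
  have hG : IsLift (fun s => F (s + n)) f := by
    intro s
    rw [← hF (s + n)]
    congr 1
    exact (para_eq_iff _ _).2 ⟨-n, by push_cast; ring⟩
  have := IsLift.deriv_eq hG hF (hF'.continuous.comp (by fun_prop)) hF'.continuous
  rw [hn, ← deriv_comp_add_const, this]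

lemma circleDeriv_comp {f g : RP1 → RP1} (hf : IsCircleDiffeo (⊤ : ℕ∞) f)
    (hg : IsCircleDiffeo (⊤ : ℕ∞) g) (x : RP1) :
    circleDeriv (fun z => f (g z)) x = circleDeriv f (g x) * circleDeriv g x := by
  obtain ⟨F, hF, hF', -⟩ := hf
  obtain ⟨G, hG, hG', -⟩ := hg
  obtain ⟨t, rfl⟩ := para_surjective x
  have dF : Differentiable ℝ F := hF'.differentiable (by simp)
  have dG : Differentiable ℝ G := hG'.differentiable (by simp)
  have hFG : IsLift (fun s => F (G s)) (fun z => f (g z)) := fun s => by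
    change f (g (para s)) = _
    rw [hG s, hF]
  rw [circleDeriv_para hFG (dF.comp dG), hG t, circleDeriv_para hF dF, circleDeriv_para hG dG]
  exact deriv_comp t (dF _) (dG _)

lemma continuous_circleDeriv {f : RP1 → RP1} (hf : IsCircleDiffeo (⊤ : ℕ∞) f) :
    Continuous (circleDeriv f) := by
  obtain ⟨F, hF, hF', -⟩ := hf
  have dF : Differentiable ℝ F := hF'.differentiable (by simp)
  rw [isQuotientMap_para.continuous_iff]
  have : circleDeriv f ∘ para = deriv F := funext fun t => circleDeriv_para hF dF t
  rw [this]
  exact hF'.continuous_deriv (by norm_cast)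

/-- The derivative of a circle diffeomorphism has constant sign. -/
lemma circleDeriv_mul_pos {f : RP1 → RP1} (hf : IsCircleDiffeo (⊤ : ℕ∞) f) (x y : RP1) :
    0 < circleDeriv f x * circleDeriv f y := by
  obtain ⟨F, hF, hF', hne, -⟩ := hf
  have dF : Differentiable ℝ F := hF'.differentiable (by simp)
  have hc : Continuous (deriv F) := hF'.continuous_deriv (by norm_cast)
  obtain ⟨s, rfl⟩ := para_surjective x
  obtain ⟨t, rfl⟩ := para_surjective y
  rw [circleDeriv_para hF dF, circleDeriv_para hF dF]
  by_contra hle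
  have hu := intermediate_value_uIcc (a := s) (b := t) hc.continuousOn
  have h0 : (0 : ℝ) ∈ uIcc (deriv F s) (deriv F t) := by
    rw [mem_uIcc]
    rcases lt_or_gt_of_ne (hne s) with h1 | h1 <;> rcases lt_or_gt_of_ne (hne t) with h2 | h2
    · exact absurd (mul_pos_of_neg_of_neg h1 h2) hle
    · exact Or.inl ⟨h1.le, h2.le⟩
    · exact Or.inr ⟨h2.le, h1.le⟩
    · exact absurd (mul_pos h1 h2) hle
  obtain ⟨r, -, hr⟩ := hu h0
  exact hne r hr

/-! ### Averaging over a convergence action -/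

section Averaging

variable {Γ : Type*} [Group Γ]

/-- The action `ρ` is a convergence action with limit points in `L`: along every ultrafilter of
elements leaving all finite sets there are an attracting point `a` and a repelling point `r` in `L`
such that `ρ γ → a` locally uniformly off `r` and `(ρ γ)⁻¹ → r` locally uniformly off `a`. -/
def IsConvergenceAction (ρ : Γ →* Equiv.Perm RP1) (L : Set RP1) : Prop :=
  ∀ U : Ultrafilter Γ, (U : Filter Γ) ≤ cofinite → ∃ a ∈ L, ∃ r ∈ L,
    (∀ y, y ≠ r → Tendsto (fun q : Γ × RP1 => ρ q.1 q.2) ((U : Filter Γ) ×ˢ 𝓝 y) (𝓝 a)) ∧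
    (∀ y, y ≠ a → Tendsto (fun q : Γ × RP1 => (ρ q.1).symm q.2) ((U : Filter Γ) ×ˢ 𝓝 y) (𝓝 r))

/-- The action `ρ` is cocompact on the complement of `L`. -/
def IsCocompactOff (ρ : Γ →* Equiv.Perm RP1) (L : Set RP1) : Prop :=
  ∃ F : Set RP1, IsClosed F ∧ Disjoint F L ∧ ∀ x, x ∉ L → ∃ γ : Γ, ρ γ x ∈ F

/-- If `γ x` stays in a closed set off the limit points while `γ → ∞`, then `x` tends to the
repelling point. -/
lemma IsConvergenceAction.exists_limits {ρ : Γ →* Equiv.Perm RP1} {L : Set RP1}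
    (hρ : IsConvergenceAction ρ L) {K : Set RP1} (hK : IsClosed K) (hKL : Disjoint K L)
    {ι : Type*} (V : Ultrafilter ι) (g : ι → Γ) (hg : Tendsto g V cofinite) (x : ι → RP1) {x₀ : RP1}
    (hx : Tendsto x V (𝓝 x₀)) (hxK : ∀ᶠ i in (V : Filter ι), ρ (g i) (x i) ∈ K) :
    ∃ k ∈ K, ∃ a ∈ L, x₀ ∈ L ∧ Tendsto (fun i => ρ (g i) (x i)) V (𝓝 k) ∧
      (∀ (y : ι → RP1) (y₀ : RP1), y₀ ≠ x₀ → Tendsto y V (𝓝 y₀) →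
        Tendsto (fun i => ρ (g i) (y i)) V (𝓝 a)) ∧
      (∀ (y : ι → RP1) (y₀ : RP1), y₀ ≠ a → Tendsto y V (𝓝 y₀) →
        Tendsto (fun i => (ρ (g i)).symm (y i)) V (𝓝 x₀)) := by
  obtain ⟨a, ha, r, hr, h1, h2⟩ := hρ (V.map g) hg
  obtain ⟨k, hk, hVk⟩ := hK.isCompact.ultrafilter_le_nhds (V.map fun i => ρ (g i) (x i))
    (le_principal_iff.2 hxK)
  have hVk' : Tendsto (fun i => ρ (g i) (x i)) V (𝓝 k) := hVk
  have hgU : Tendsto g V (V.map g : Ultrafilter Γ) := tendsto_map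
  have hka : k ≠ a := by
    rintro rfl
    exact Set.disjoint_left.1 hKL hk ha
  have hinv : ∀ (y : ι → RP1) (y₀ : RP1), y₀ ≠ a → Tendsto y V (𝓝 y₀) →
      Tendsto (fun i => (ρ (g i)).symm (y i)) V (𝓝 r) := fun y y₀ hy h =>
    (h2 y₀ hy).comp (hgU.prodMk h)
  have hr' : Tendsto x V (𝓝 r) := by simpa using hinv _ k hka hVk'
  obtain rfl : x₀ = r := tendsto_nhds_unique hx hr'
  exact ⟨k, hk, a, ha, hr, hVk', fun y y₀ hy h => (h1 y₀ hy).comp (hgU.prodMk h), hinv⟩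

lemma IsConvergenceAction.eventually_notMem {ρ : Γ →* Equiv.Perm RP1} {L : Set RP1}
    (hρ : IsConvergenceAction ρ L) {K : Set RP1} (hK : IsClosed K) (hKL : Disjoint K L)
    {x₀ : RP1} (hx₀ : x₀ ∉ L) :
    ∀ᶠ q in (cofinite : Filter Γ) ×ˢ 𝓝 x₀, ρ q.1 q.2 ∉ K := by
  by_contra hcon
  rw [not_eventually] at hcon
  simp only [not_not] at hcon
  rw [frequently_iff_neBot] at hcon
  obtain ⟨V, hV⟩ := Ultrafilter.exists_le
    (((cofinite : Filter Γ) ×ˢ 𝓝 x₀) ⊓ 𝓟 {q | ρ q.1 q.2 ∈ K})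
  have hV1 := hV.trans inf_le_left
  have hV2 : ∀ᶠ q in (V : Filter (Γ × RP1)), ρ q.1 q.2 ∈ K := le_principal_iff.1 (hV.trans inf_le_right)
  obtain ⟨k, -, a, -, hxL, -⟩ := hρ.exists_limits hK hKL V Prod.fst (tendsto_fst.mono_left hV1)
    Prod.snd (tendsto_snd.mono_left hV1) hV2
  exact hx₀ hxL

/-- The pull-back of the form `ω₂` by `ρ γ`. -/
def pullForm (ρ : Γ →* Equiv.Perm RP1) (ω₂ : RP1 → RP1 → ℝ) (γ : Γ) (x y : RP1) : ℝ :=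
  ω₂ (ρ γ x) (ρ γ y) * circleDeriv (ρ γ) x * circleDeriv (ρ γ) y

lemma pullForm_pos {ρ : Γ →* Equiv.Perm RP1} {ω₂ : RP1 → RP1 → ℝ}
    (hdiff : ∀ γ : Γ, IsCircleDiffeo (⊤ : ℕ∞) (ρ γ)) (hω₂ : IsVolumeForm (⊤ : ℕ∞) ω₂) (γ : Γ)
    {x y : RP1} (hxy : x ≠ y) : 0 < pullForm ρ ω₂ γ x y := by
  unfold pullForm
  rw [mul_assoc]
  exact mul_pos (hω₂.1 _ _ ((ρ γ).injective.ne hxy)) (circleDeriv_mul_pos (hdiff γ) _ _)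

/-- Invariance of `ω₂` on `L × S¹ ∪ S¹ × L` expresses the pull-back of `ω₂` at any point through
cross-ratio-like quantities of `ω₂` alone: the derivatives cancel. -/
lemma pullForm_eq_cross {ρ : Γ →* Equiv.Perm RP1} {L : Set RP1} {ω₂ : RP1 → RP1 → ℝ}
    (hdiff : ∀ γ : Γ, IsCircleDiffeo (⊤ : ℕ∞) (ρ γ)) (hω₂ : IsVolumeForm (⊤ : ℕ∞) ω₂)
    (hinv : ∀ (γ : Γ) (x y : RP1), x ≠ y → (x ∈ L ∨ y ∈ L) → pullForm ρ ω₂ γ x y = ω₂ x y)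
    (γ : Γ) {x y x' y' : RP1} (hx' : x' ∈ L) (hy' : y' ∈ L) (h1 : x ≠ y')
    (h2 : x' ≠ y) (h3 : x' ≠ y') :
    pullForm ρ ω₂ γ x y =
      ω₂ (ρ γ x) (ρ γ y) * ω₂ (ρ γ x') (ρ γ y') / (ω₂ (ρ γ x) (ρ γ y') * ω₂ (ρ γ x') (ρ γ y)) *
        (ω₂ x y' * ω₂ x' y / ω₂ x' y') := by
  rw [← hinv γ x y' h1 (Or.inr hy'), ← hinv γ x' y h2 (Or.inl hx'), ← hinv γ x' y' h3 (Or.inl hx')]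
  have p1 := (hω₂.1 _ _ ((ρ γ).injective.ne h1)).ne'
  have p2 := (hω₂.1 _ _ ((ρ γ).injective.ne h2)).ne'
  have p3 := (hω₂.1 _ _ ((ρ γ).injective.ne h3)).ne'
  have hd : ∀ z, circleDeriv (ρ γ) z ≠ 0 := fun z h0 => by
    have := circleDeriv_mul_pos (hdiff γ) z z
    simp [h0] at this
  have d1 := hd x'
  have d2 := hd y'
  unfold pullForm
  field_simp

/-- The pull-backs of `ω₂` by those `γ` with `γ x` in a given compact set off `L` are uniformly
close to `ω₂ x₀ y₀` when `(x, y)` tends to `(x₀, y₀)` with `x₀ ∈ L`. -/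
lemma pullForm_near_limit {ρ : Γ →* Equiv.Perm RP1} {L : Set RP1} {ω₂ : RP1 → RP1 → ℝ}
    (hρ : IsConvergenceAction ρ L) (hLinv : ∀ (γ : Γ) (x : RP1), ρ γ x ∈ L ↔ x ∈ L)
    (hLnt : L.Nontrivial)
    (hdiff : ∀ γ : Γ, IsCircleDiffeo (⊤ : ℕ∞) (ρ γ)) (hω₂ : IsVolumeForm (⊤ : ℕ∞) ω₂)
    (hinv : ∀ (γ : Γ) (x y : RP1), x ≠ y → (x ∈ L ∨ y ∈ L) → pullForm ρ ω₂ γ x y = ω₂ x y)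
    {K : Set RP1} (hK : IsClosed K) (hKL : Disjoint K L)
    {x₀ y₀ : RP1} (hx₀ : x₀ ∈ L) (hxy : x₀ ≠ y₀) {ε : ℝ} (hε : 0 < ε) :
    ∀ᶠ q in 𝓝 (x₀, y₀), ∀ γ : Γ, ρ γ q.1 ∈ K → |pullForm ρ ω₂ γ q.1 q.2 - ω₂ x₀ y₀| < ε := by
  by_contra hcon
  rw [not_eventually, frequently_iff_neBot] at hcon
  obtain ⟨V, hV⟩ := Ultrafilter.exists_le (𝓝 (x₀, y₀) ⊓ 𝓟 {q : RP1 × RP1 |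
    ¬ ∀ γ : Γ, ρ γ q.1 ∈ K → |pullForm ρ ω₂ γ q.1 q.2 - ω₂ x₀ y₀| < ε})
  have hV1 := hV.trans inf_le_left
  have hV2 : ∀ᶠ q in (V : Filter (RP1 × RP1)),
      ¬ ∀ γ : Γ, ρ γ q.1 ∈ K → |pullForm ρ ω₂ γ q.1 q.2 - ω₂ x₀ y₀| < ε :=
    le_principal_iff.1 (hV.trans inf_le_right)
  have hV3 : ∀ q : RP1 × RP1, ∃ γ : Γ,
      (¬ ∀ γ : Γ, ρ γ q.1 ∈ K → |pullForm ρ ω₂ γ q.1 q.2 - ω₂ x₀ y₀| < ε) →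
      ρ γ q.1 ∈ K ∧ ε ≤ |pullForm ρ ω₂ γ q.1 q.2 - ω₂ x₀ y₀| := by
    intro q
    by_cases hq : ∀ γ : Γ, ρ γ q.1 ∈ K → |pullForm ρ ω₂ γ q.1 q.2 - ω₂ x₀ y₀| < ε
    · exact ⟨1, fun h => absurd hq h⟩
    · push Not at hq
      obtain ⟨γ, h⟩ := hq
      exact ⟨γ, fun _ => h⟩
  choose g hg using hV3
  have hgK : ∀ᶠ q in (V : Filter (RP1 × RP1)), ρ (g q) q.1 ∈ K := hV2.mono fun q hq => (hg q hq).1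
  have hgε : ∀ᶠ q in (V : Filter (RP1 × RP1)),
      ε ≤ |pullForm ρ ω₂ (g q) q.1 q.2 - ω₂ x₀ y₀| := hV2.mono fun q hq => (hg q hq).2
  have hx : Tendsto (fun q : RP1 × RP1 => q.1) V (𝓝 x₀) := (continuous_fst.tendsto _).mono_left hV1
  have hy : Tendsto (fun q : RP1 × RP1 => q.2) V (𝓝 y₀) := (continuous_snd.tendsto _).mono_left hV1
  have hKx : x₀ ∉ K := fun h => Set.disjoint_left.1 hKL h hx₀
  have hgcof : Tendsto g V cofinite := by
    -- otherwise `g` is eventually constant along `V`, and then `γ x₀ ∈ K ∩ L`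
    rw [Filter.tendsto_def]
    intro s hs
    by_contra hns
    have hns' : g ⁻¹' sᶜ ∈ V := Ultrafilter.compl_mem_iff_notMem.2 hns
    have hfin : sᶜ.Finite := hs
    obtain ⟨γ, -, hγ⟩ : ∃ γ ∈ sᶜ, {q | g q = γ} ∈ V := by
      have : (⋃ γ ∈ sᶜ, {q | g q = γ}) ∈ V := by
        convert hns' using 1
        ext q
        simp
      exact (Ultrafilter.finite_biUnion_mem_iff hfin).1 this
    have hc : Tendsto (fun q : RP1 × RP1 => ρ γ q.1) V (𝓝 (ρ γ x₀)) := by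
      obtain ⟨F, hF, hF', -⟩ := hdiff γ
      have : Continuous (ρ γ) := by
        rw [isQuotientMap_para.continuous_iff]
        have : (ρ γ) ∘ para = para ∘ F := funext hF
        rw [this]
        exact continuous_para.comp hF'.continuous
      exact (this.tendsto _).comp hx
    have hmem : ρ γ x₀ ∈ K := by
      refine hK.mem_of_tendsto hc ?_
      filter_upwards [hgK, hγ] with q h1 h2
      have : g q = γ := h2
      rwa [this] at h1
    exact Set.disjoint_left.1 hKL hmem ((hLinv γ x₀).2 hx₀)
  obtain ⟨k, hk, a, ha, -, hka, hfwd, hbwd⟩ := hρ.exists_limits hK hKL V g hgcof _ hx hgK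
  have hkne : k ≠ a := by
    rintro rfl
    exact Set.disjoint_left.1 hKL hk ha
  obtain ⟨p, hp, hpa⟩ := hLnt.exists_ne a
  obtain ⟨y', hy', hyx⟩ := hLnt.exists_ne x₀
  -- the auxiliary point of `L` in the first variable moves with `γ`, so that its image is `p`
  have hx' : Tendsto (fun q : RP1 × RP1 => (ρ (g q)).symm p) V (𝓝 x₀) :=
    hbwd (fun _ => p) p hpa tendsto_const_nhds
  have hγy := hfwd _ y₀ hxy.symm hy
  have hγy' := hfwd (fun _ => y') y' hyx tendsto_const_nhds
  have t1 := hω₂.tendsto hkne hka hγy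
  have t2 := hω₂.tendsto hkne hka hγy'
  have t3 := hω₂.tendsto hpa (tendsto_const_nhds (x := p) (f := (V : Filter (RP1 × RP1)))) hγy
  have t4 := hω₂.tendsto hpa (tendsto_const_nhds (x := p) (f := (V : Filter (RP1 × RP1)))) hγy'
  have s1 := hω₂.tendsto hyx.symm hx (tendsto_const_nhds (x := y') (f := (V : Filter (RP1 × RP1))))
  have s2 := hω₂.tendsto hxy hx' hy
  have s3 := hω₂.tendsto hyx.symm hx' (tendsto_const_nhds (x := y') (f := (V : Filter (RP1 × RP1))))
  have n1 := (hω₂.1 _ _ hkne).ne'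
  have n2 := (hω₂.1 _ _ hpa).ne'
  have n3 := (hω₂.1 _ _ hyx.symm).ne'
  have lim := ((t1.mul t4).div (t2.mul t3) (mul_ne_zero n1 n2)).mul ((s1.mul s2).div s3 n3)
  have hval : ω₂ k a * ω₂ p a / (ω₂ k a * ω₂ p a) * (ω₂ x₀ y' * ω₂ x₀ y₀ / ω₂ x₀ y') =
      ω₂ x₀ y₀ := by
    field_simp
  rw [hval] at lim
  have hlim : Tendsto (fun q : RP1 × RP1 => pullForm ρ ω₂ (g q) q.1 q.2) V (𝓝 (ω₂ x₀ y₀)) := by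
    refine lim.congr' ?_
    have e1 : ∀ᶠ q in (V : Filter (RP1 × RP1)), q.1 ≠ y' := hx.eventually_ne hyx.symm
    have e2 : ∀ᶠ q in (V : Filter (RP1 × RP1)), (ρ (g q)).symm p ≠ q.2 :=
      (hx'.prodMk_nhds hy).eventually (isClosed_diagonal.isOpen_compl.mem_nhds hxy)
    have e3 : ∀ᶠ q in (V : Filter (RP1 × RP1)), (ρ (g q)).symm p ≠ y' := hx'.eventually_ne hyx.symm
    filter_upwards [e1, e2, e3] with q q1 q2 q3
    have hpL : (ρ (g q)).symm p ∈ L := by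
      rw [← hLinv (g q)]
      simpa using hp
    have := pullForm_eq_cross hdiff hω₂ hinv (g q) hpL hy' q1 q2 q3
    rw [this]
    simp
  have hball := (Metric.tendsto_nhds.1 hlim) ε hε
  obtain ⟨q, h1, h2⟩ := (hball.and hgε).exists
  rw [Real.dist_eq] at h1
  exact absurd h1 (not_lt.2 h2)

/-- Averaging with weights supported in a compact set off `L` turns a form invariant at the points
of `L × S¹ ∪ S¹ × L` into an invariant one, with the same values there. -/
lemma exists_invariant_form {ρ : Γ →* Equiv.Perm RP1} {L : Set RP1} {ω₂ : RP1 → RP1 → ℝ}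
    (hρ : IsConvergenceAction ρ L) (hco : IsCocompactOff ρ L)
    (hLinv : ∀ (γ : Γ) (x : RP1), ρ γ x ∈ L ↔ x ∈ L) (hLc : IsClosed L)
    (hLnt : L.Nontrivial)
    (hdiff : ∀ γ : Γ, IsCircleDiffeo (⊤ : ℕ∞) (ρ γ)) (hω₂ : IsVolumeForm (⊤ : ℕ∞) ω₂)
    (hinv : ∀ (γ : Γ) (x y : RP1), x ≠ y → (x ∈ L ∨ y ∈ L) → pullForm ρ ω₂ γ x y = ω₂ x y) :
    ∃ ω : RP1 → RP1 → ℝ, IsVolumeForm 0 ω ∧ (∀ γ : Γ, PreservesForm (ρ γ) ω) ∧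
      ∀ x y : RP1, x ≠ y → (x ∈ L ∨ y ∈ L) → ω x y = ω₂ x y := by
  have hcontρ : ∀ γ : Γ, Continuous (ρ γ) := by
    intro γ
    obtain ⟨F, hF, hF', -⟩ := hdiff γ
    rw [isQuotientMap_para.continuous_iff]
    have : (ρ γ) ∘ para = para ∘ F := funext hF
    rw [this]
    exact continuous_para.comp hF'.continuous
  obtain ⟨F, hFc, hFL, hF⟩ := hco
  obtain ⟨f, hf0, hf1, hf⟩ := exists_continuous_zero_one_of_isClosed hLc hFc hFL.symm
  -- a weight whose support lies in the closed set `{1/2 ≤ f}`, which is disjoint from `L`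
  set χ : RP1 → ℝ := fun x => max (f x - 1 / 2) 0 with hχ
  have hχc : Continuous χ := by
    rw [hχ]
    fun_prop
  have hχ0 : ∀ x, 0 ≤ χ x := fun x => le_max_right _ _
  have hχF : ∀ x ∈ F, 0 < χ x := by
    intro x hx
    have h1 : f x = 1 := hf1 hx
    refine lt_max_of_lt_left ?_
    rw [h1]
    norm_num
  set K : Set RP1 := {x | 1 / 2 ≤ f x} with hKdef
  have hK : IsClosed K := isClosed_le continuous_const f.continuous
  have hKL : Disjoint K L := by
    rw [Set.disjoint_left]
    intro x hx hxL
    have h1 : f x = 0 := hf0 hxL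
    have h2 : 1 / 2 ≤ f x := hx
    rw [h1] at h2
    norm_num at h2
  have hχK : ∀ x, χ x ≠ 0 → x ∈ K := by
    intro x hx
    by_contra hxK
    apply hx
    have h2 : ¬ 1 / 2 ≤ f x := hxK
    exact max_eq_right (by linarith)
  have hlocfin : ∀ x₀, x₀ ∉ L → ∃ A : Finset Γ, ∀ᶠ x in 𝓝 x₀, ∀ γ, γ ∉ A → χ (ρ γ x) = 0 := by
    intro x₀ hx₀
    obtain ⟨p, hp, q, hq, hpq⟩ := eventually_prod_iff.1 (hρ.eventually_notMem hK hKL hx₀)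
    have hfin : {γ | ¬ p γ}.Finite := hp
    refine ⟨hfin.toFinset, hq.mono fun x hx γ hγ => ?_⟩
    have hpγ : p γ := by simpa using hγ
    by_contra hne
    exact hpq hpγ hx (hχK _ hne)
  set num : RP1 → RP1 → ℝ := fun x y => ∑ᶠ γ : Γ, χ (ρ γ x) * pullForm ρ ω₂ γ x y with hnum
  set den : RP1 → ℝ := fun x => ∑ᶠ γ : Γ, χ (ρ γ x) with hden
  have hnumA : ∀ (A : Finset Γ) (x y : RP1), (∀ γ, γ ∉ A → χ (ρ γ x) = 0) →
      num x y = ∑ γ ∈ A, χ (ρ γ x) * pullForm ρ ω₂ γ x y := by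
    intro A x y hA
    refine finsum_eq_sum_of_support_subset _ fun γ hγ => ?_
    by_contra hn
    exact hγ (by simp [hA γ hn])
  have hdenA : ∀ (A : Finset Γ) (x : RP1), (∀ γ, γ ∉ A → χ (ρ γ x) = 0) →
      den x = ∑ γ ∈ A, χ (ρ γ x) := by
    intro A x hA
    refine finsum_eq_sum_of_support_subset _ fun γ hγ => ?_
    by_contra hn
    exact hγ (by simp [hA γ hn])
  have hsumpos : ∀ (A : Finset Γ) (x : RP1), x ∉ L → (∀ γ, γ ∉ A → χ (ρ γ x) = 0) →
      ∃ γ ∈ A, 0 < χ (ρ γ x) := by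
    intro A x hx hA
    obtain ⟨γ, hγ⟩ := hF x hx
    refine ⟨γ, ?_, hχF _ hγ⟩
    by_contra hn
    exact (hχF _ hγ).ne' (hA γ hn)
  have hdenpos : ∀ x, x ∉ L → 0 < den x := by
    intro x hx
    obtain ⟨A, hA⟩ := hlocfin x hx
    rw [hdenA A x hA.self_of_nhds]
    obtain ⟨γ, hγA, hγ⟩ := hsumpos A x hx hA.self_of_nhds
    exact Finset.sum_pos' (fun γ _ => hχ0 _) ⟨γ, hγA, hγ⟩
  have hnumpos : ∀ x y, x ∉ L → x ≠ y → 0 < num x y := by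
    intro x y hx hxy
    obtain ⟨A, hA⟩ := hlocfin x hx
    rw [hnumA A x y hA.self_of_nhds]
    obtain ⟨γ, hγA, hγ⟩ := hsumpos A x hx hA.self_of_nhds
    exact Finset.sum_pos' (fun γ _ => mul_nonneg (hχ0 _) (pullForm_pos hdiff hω₂ γ hxy).le)
      ⟨γ, hγA, mul_pos hγ (pullForm_pos hdiff hω₂ γ hxy)⟩
  set ω : RP1 → RP1 → ℝ := fun x y => if x ∈ L then ω₂ x y else num x y / den x with hω
  have hωL : ∀ x y, x ∈ L → ω x y = ω₂ x y := fun x y hx => if_pos hx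
  have hωΩ : ∀ x y, x ∉ L → ω x y = num x y / den x := fun x y hx => if_neg hx
  refine ⟨ω, isVolumeForm_zero_of_continuousAt ?_ ?_, ?_, ?_⟩
  · intro x y hxy
    by_cases hx : x ∈ L
    · rw [hωL x y hx]
      exact hω₂.1 _ _ hxy
    · rw [hωΩ x y hx]
      exact div_pos (hnumpos x y hx hxy) (hdenpos x hx)
  · intro x₀ y₀ hxy
    by_cases hx : x₀ ∈ L
    · rw [hωL x₀ y₀ hx, Metric.tendsto_nhds]
      intro ε hε
      have hnear := pullForm_near_limit hρ hLinv hLnt hdiff hω₂ hinv hK hKL hx hxy hε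
      have hnear₂ := (Metric.tendsto_nhds.1 (hω₂.continuousAt hxy)) ε hε
      filter_upwards [hnear, hnear₂] with q h1 h2
      by_cases hq : q.1 ∈ L
      · rwa [hωL _ _ hq]
      · rw [hωΩ _ _ hq, Real.dist_eq]
        obtain ⟨A, hA⟩ := hlocfin q.1 hq
        have hA' := hA.self_of_nhds
        have hd := hdenpos q.1 hq
        have heq : num q.1 q.2 / den q.1 - ω₂ x₀ y₀ =
            (∑ γ ∈ A, χ (ρ γ q.1) * (pullForm ρ ω₂ γ q.1 q.2 - ω₂ x₀ y₀)) / den q.1 := by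
          rw [eq_div_iff hd.ne', sub_mul, div_mul_cancel₀ _ hd.ne', hnumA A _ _ hA', hdenA A _ hA',
            Finset.mul_sum, ← Finset.sum_sub_distrib]
          exact Finset.sum_congr rfl fun γ _ => by ring
        rw [heq, abs_div, abs_of_pos hd, div_lt_iff₀ hd, hdenA A _ hA', Finset.mul_sum]
        refine (Finset.abs_sum_le_sum_abs _ _).trans_lt ?_
        have hle : ∀ γ ∈ A, |χ (ρ γ q.1) * (pullForm ρ ω₂ γ q.1 q.2 - ω₂ x₀ y₀)| ≤
            ε * χ (ρ γ q.1) := by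
          intro γ _
          rw [abs_mul, abs_of_nonneg (hχ0 _), mul_comm]
          by_cases h0 : χ (ρ γ q.1) = 0
          · simp [h0]
          · exact mul_le_mul_of_nonneg_right (h1 γ (hχK _ h0)).le (hχ0 _)
        obtain ⟨γ, hγA, hγ⟩ := hsumpos A q.1 hq hA'
        refine Finset.sum_lt_sum hle ⟨γ, hγA, ?_⟩
        rw [abs_mul, abs_of_nonneg (hχ0 _), mul_comm]
        exact mul_lt_mul_of_pos_right (h1 γ (hχK _ hγ.ne')) hγ
    · rw [hωΩ x₀ y₀ hx]
      obtain ⟨A, hA⟩ := hlocfin x₀ hx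
      have hfst : Tendsto (fun q : RP1 × RP1 => q.1) (𝓝 (x₀, y₀)) (𝓝 x₀) := continuous_fst.tendsto _
      have hsnd : Tendsto (fun q : RP1 × RP1 => q.2) (𝓝 (x₀, y₀)) (𝓝 y₀) := continuous_snd.tendsto _
      have hpull : ∀ γ : Γ, Tendsto (fun q : RP1 × RP1 => pullForm ρ ω₂ γ q.1 q.2) (𝓝 (x₀, y₀))
          (𝓝 (pullForm ρ ω₂ γ x₀ y₀)) := by
        intro γ
        have hd := continuous_circleDeriv (hdiff γ)
        exact ((hω₂.tendsto ((ρ γ).injective.ne hxy) (((hcontρ γ).tendsto _).comp hfst)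
          (((hcontρ γ).tendsto _).comp hsnd)).mul ((hd.tendsto _).comp hfst)).mul
          ((hd.tendsto _).comp hsnd)
      have hw : ∀ γ : Γ, Tendsto (fun q : RP1 × RP1 => χ (ρ γ q.1)) (𝓝 (x₀, y₀))
          (𝓝 (χ (ρ γ x₀))) := fun γ => ((hχc.comp (hcontρ γ)).tendsto _).comp hfst
      have hlim : Tendsto (fun q : RP1 × RP1 =>
          (∑ γ ∈ A, χ (ρ γ q.1) * pullForm ρ ω₂ γ q.1 q.2) / ∑ γ ∈ A, χ (ρ γ q.1)) (𝓝 (x₀, y₀))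
          (𝓝 (num x₀ y₀ / den x₀)) := by
        rw [hnumA A _ _ hA.self_of_nhds]
        have hd := (hdenpos x₀ hx).ne'
        rw [hdenA A _ hA.self_of_nhds] at hd ⊢
        exact (tendsto_finsetSum _ fun γ _ => (hw γ).mul (hpull γ)).div
          (tendsto_finsetSum _ fun γ _ => hw γ) hd
      refine hlim.congr' ?_
      filter_upwards [hfst.eventually hA, hfst.eventually (hLc.isOpen_compl.mem_nhds hx)] with q h1 h2
      rw [hωΩ _ _ h2, hnumA A _ _ h1, hdenA A _ h1]
  · intro g x y hxy
    by_cases hx : x ∈ L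
    · rw [hωL _ _ hx, hωL _ _ ((hLinv g x).2 hx)]
      exact hinv g x y hxy (Or.inl hx)
    · have hgx : ρ g x ∉ L := fun hc => hx ((hLinv g x).1 hc)
      rw [hωΩ _ _ hx, hωΩ _ _ hgx]
      have hden_eq : den (ρ g x) = den x := by
        have := finsum_comp_equiv (Equiv.mulRight g) (f := fun γ : Γ => χ (ρ γ x))
        rw [hden]
        simpa using this
      have hterm : ∀ γ : Γ, pullForm ρ ω₂ γ (ρ g x) (ρ g y) * (circleDeriv (ρ g) x * circleDeriv (ρ g) y)
          = pullForm ρ ω₂ (γ * g) x y := by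
        intro γ
        have hcomp : ∀ z, circleDeriv (ρ (γ * g)) z =
            circleDeriv (ρ γ) (ρ g z) * circleDeriv (ρ g) z := by
          intro z
          have : (ρ (γ * g) : RP1 → RP1) = fun z => ρ γ (ρ g z) := by
            rw [map_mul]
            rfl
          rw [this]
          exact circleDeriv_comp (hdiff γ) (hdiff g) z
        unfold pullForm
        rw [hcomp, hcomp, map_mul]
        simp only [Equiv.Perm.mul_apply]
        ring
      have hnum_eq : num (ρ g x) (ρ g y) * (circleDeriv (ρ g) x * circleDeriv (ρ g) y) = num x y := by
        have := finsum_comp_equiv (Equiv.mulRight g)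
          (f := fun γ : Γ => χ (ρ γ x) * pullForm ρ ω₂ γ x y)
        have hne : circleDeriv (ρ g) x * circleDeriv (ρ g) y ≠ 0 :=
          (circleDeriv_mul_pos (hdiff g) x y).ne'
        rw [hnum]
        simp only
        rw [finsum_mul' _ _ ?_, ← this]
        · refine finsum_congr fun γ => ?_
          rw [mul_assoc, hterm]
          simp
        · obtain ⟨A, hA⟩ := hlocfin (ρ g x) hgx
          refine A.finite_toSet.subset fun γ hγ => ?_
          by_contra hn
          exact hγ (by simp [hA.self_of_nhds γ hn])
      rw [hden_eq, ← hnum_eq]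
      ring
  · intro x y hxy hL
    by_cases hx : x ∈ L
    · exact hωL x y hx
    · have hd := (hdenpos x hx).ne'
      rw [hωΩ x y hx, div_eq_iff hd]
      obtain ⟨A, hA⟩ := hlocfin x hx
      rw [hnumA A _ _ hA.self_of_nhds, hdenA A _ hA.self_of_nhds, Finset.mul_sum]
      refine Finset.sum_congr rfl fun γ _ => ?_
      rw [hinv γ x y hxy hL, mul_comm]

end Averaging

/-! ### Dynamics of diverging families in `SL(2,ℝ)` -/

/-- The square of the Euclidean norm of a plane vector. -/
def nsq (v : Fin 2 → ℝ) : ℝ := v 0 ^ 2 + v 1 ^ 2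

/-- The entries of an element of `SL(2,ℝ)`, as a bare function. -/
def ent (M : SL2) : Fin 2 → Fin 2 → ℝ := fun i j => M i j

/-- The square of the Frobenius norm of a matrix of determinant one. -/
def fro (M : SL2) : ℝ := ent M 0 0 ^ 2 + ent M 0 1 ^ 2 + ent M 1 0 ^ 2 + ent M 1 1 ^ 2

/-- The linear action of a `2 × 2` array of reals on plane vectors, in coordinates. -/
def app (T : Fin 2 → Fin 2 → ℝ) (v : Fin 2 → ℝ) : Fin 2 → ℝ :=
  ![T 0 0 * v 0 + T 0 1 * v 1, T 1 0 * v 0 + T 1 1 * v 1]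

lemma app_zero (T : Fin 2 → Fin 2 → ℝ) (v : Fin 2 → ℝ) :
    app T v 0 = T 0 0 * v 0 + T 0 1 * v 1 := rfl

lemma app_one (T : Fin 2 → Fin 2 → ℝ) (v : Fin 2 → ℝ) :
    app T v 1 = T 1 0 * v 0 + T 1 1 * v 1 := rfl

lemma vec_ext {v w : Fin 2 → ℝ} (h0 : v 0 = w 0) (h1 : v 1 = w 1) : v = w := by
  ext i
  fin_cases i
  · exact h0
  · exact h1

lemma sl2_det (M : SL2) : ent M 0 0 * ent M 1 1 - ent M 0 1 * ent M 1 0 = 1 := by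
  have := M.det_coe
  rwa [Matrix.det_fin_two] at this

lemma app_ne_zero (M : SL2) {v : Fin 2 → ℝ} (hv : v ≠ 0) : app (ent M) v ≠ 0 := by
  intro h
  have h0 : ent M 0 0 * v 0 + ent M 0 1 * v 1 = 0 := congrFun h 0
  have h1 : ent M 1 0 * v 0 + ent M 1 1 * v 1 = 0 := congrFun h 1
  have hd := sl2_det M
  apply hv
  apply vec_ext
  · simp only [Pi.zero_apply]
    linear_combination (ent M 1 1) * h0 - (ent M 0 1) * h1 - v 0 * hd
  · simp only [Pi.zero_apply]
    linear_combination (ent M 0 0) * h1 - (ent M 1 0) * h0 - v 1 * hd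

lemma mobius_mk (M : SL2) (v : Fin 2 → ℝ) (hv : v ≠ 0) :
    mobius M (Projectivization.mk ℝ v hv) =
      Projectivization.mk ℝ (app (ent M) v) (app_ne_zero M hv) := by
  unfold mobius
  rw [Projectivization.map_mk]
  congr 1
  ext i
  fin_cases i <;>
    simp [app, ent, Matrix.SpecialLinearGroup.toLin'_apply, Matrix.mulVec, dotProduct,
      Fin.sum_univ_two]

lemma inv_entries (M : SL2) : ent M⁻¹ 0 0 = ent M 1 1 ∧ ent M⁻¹ 0 1 = -ent M 0 1 ∧
    ent M⁻¹ 1 0 = -ent M 1 0 ∧ ent M⁻¹ 1 1 = ent M 0 0 := by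
  unfold ent
  rw [Matrix.SpecialLinearGroup.SL2_inv_expl]
  simp

lemma mul_entries (M N : SL2) (i j : Fin 2) :
    ent (M * N) i j = ent M i 0 * ent N 0 j + ent M i 1 * ent N 1 j := by
  unfold ent
  rw [Matrix.SpecialLinearGroup.coe_mul, Matrix.mul_apply, Fin.sum_univ_two]

lemma fro_inv (M : SL2) : fro M⁻¹ = fro M := by
  obtain ⟨h1, h2, h3, h4⟩ := inv_entries M
  unfold fro
  rw [h1, h2, h3, h4]
  ring

lemma app_inv (M : SL2) (v : Fin 2 → ℝ) : app (ent M) (app (ent M⁻¹) v) = v := by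
  obtain ⟨h1, h2, h3, h4⟩ := inv_entries M
  have hd := sl2_det M
  apply vec_ext
  · simp only [app_zero, app_one, h1, h2, h3, h4]
    linear_combination v 0 * hd
  · simp only [app_zero, app_one, h1, h2, h3, h4]
    linear_combination v 1 * hd

lemma app_mul (M N : SL2) (v : Fin 2 → ℝ) :
    app (ent (M * N)) v = app (ent M) (app (ent N) v) := by
  apply vec_ext
  · simp only [app_zero, app_one, mul_entries]
    ring
  · simp only [app_zero, app_one, mul_entries]
    ring

lemma mobius_mul (M N : SL2) (x : RP1) : mobius (M * N) x = mobius M (mobius N x) := by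
  induction x using Projectivization.ind with
  | h v hv =>
    rw [mobius_mk, mobius_mk, mobius_mk]
    simp only [app_mul]

lemma mobius_inv_apply (M : SL2) (x : RP1) : mobius M (mobius M⁻¹ x) = x := by
  induction x using Projectivization.ind with
  | h v hv =>
    rw [mobius_mk, mobius_mk]
    simp only [app_inv]

lemma fro_pos (M : SL2) : 0 < fro M := by
  have hd := sl2_det M
  unfold fro
  nlinarith [sq_nonneg (ent M 0 0 - ent M 1 1), sq_nonneg (ent M 0 1 + ent M 1 0)]

lemma nsq_nonneg (v : Fin 2 → ℝ) : 0 ≤ nsq v := by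
  unfold nsq
  positivity

lemma nsq_pos {v : Fin 2 → ℝ} (hv : v ≠ 0) : 0 < nsq v := (vec_ne_zero_iff v).1 hv

lemma nsq_app_le (M : SL2) (v : Fin 2 → ℝ) : nsq (app (ent M) v) ≤ fro M * nsq v := by
  unfold nsq fro
  simp only [app_zero, app_one]
  nlinarith [sq_nonneg (ent M 0 0 * v 1 - ent M 0 1 * v 0),
    sq_nonneg (ent M 1 0 * v 1 - ent M 1 1 * v 0)]

lemma fro_mul_le (M N : SL2) : fro (M * N) ≤ fro M * fro N := by
  unfold fro
  simp only [mul_entries]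
  generalize ent M 0 0 = a
  generalize ent M 0 1 = b
  generalize ent M 1 0 = c
  generalize ent M 1 1 = d
  generalize ent N 0 0 = a₁
  generalize ent N 0 1 = b₁
  generalize ent N 1 0 = c₁
  generalize ent N 1 1 = d₁
  nlinarith [sq_nonneg (a * c₁ - b * a₁), sq_nonneg (a * d₁ - b * b₁),
    sq_nonneg (c * c₁ - d * a₁), sq_nonneg (c * d₁ - d * b₁)]

/-- Matrices with the same projective action are equal up to sign. -/
lemma eq_or_neg_of_mobius_eq {M N : SL2} (h : mobius M = mobius N) :
    ∃ k : ℝ, k ^ 2 = 1 ∧ ∀ i j, ent M i j = k * ent N i j := by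
  have hc : ∀ v : Fin 2 → ℝ, v ≠ 0 →
      app (ent M) v 0 * app (ent N) v 1 = app (ent M) v 1 * app (ent N) v 0 := by
    intro v hv
    have := congrFun h (Projectivization.mk ℝ v hv)
    rw [mobius_mk, mobius_mk, mk_eq_iff_cross] at this
    exact this
  have c1 := hc ![1, 0] (by simp)
  have c2 := hc ![0, 1] (by simp)
  have c3 := hc ![1, 1] (by simp)
  have dM := sl2_det M
  have dN := sl2_det N
  simp only [app_zero, app_one, Matrix.cons_val_zero, Matrix.cons_val_one,
    Matrix.cons_val_fin_one, mul_one, mul_zero, add_zero, zero_add] at c1 c2 c3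
  simp only [Fin.forall_fin_two]
  generalize ent M 0 0 = a at *
  generalize ent M 0 1 = b at *
  generalize ent M 1 0 = c at *
  generalize ent M 1 1 = d at *
  generalize ent N 0 0 = a' at *
  generalize ent N 0 1 = b' at *
  generalize ent N 1 0 = c' at *
  generalize ent N 1 1 = d' at *
  have hk : a * d' - c * b' = d * a' - b * c' := by linear_combination c3 - c1 - c2
  have ea : a = (a * d' - c * b') * a' := by linear_combination (-a) * dN - b' * c1
  have ec : c = (a * d' - c * b') * c' := by linear_combination (-c) * dN - d' * c1
  have eb : b = (a * d' - c * b') * b' := by rw [hk]; linear_combination (-b) * dN + a' * c2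
  have ed : d = (a * d' - c * b') * d' := by rw [hk]; linear_combination (-d) * dN + c' * c2
  refine ⟨a * d' - c * b', ?_, ⟨ea, eb⟩, ec, ed⟩
  generalize a * d' - c * b' = k at *
  subst ea eb ec ed
  linear_combination dM - k ^ 2 * dN

lemma nsq_app_eq_of_mobius_eq {M N : SL2} (h : mobius M = mobius N) (v : Fin 2 → ℝ) :
    nsq (app (ent M) v) = nsq (app (ent N) v) := by
  obtain ⟨k, hk, he⟩ := eq_or_neg_of_mobius_eq h
  unfold nsq
  simp only [app_zero, app_one, he]
  linear_combination ((ent N 0 0 * v 0 + ent N 0 1 * v 1) ^ 2 +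
    (ent N 1 0 * v 0 + ent N 1 1 * v 1) ^ 2) * hk

lemma fro_eq_of_mobius_eq {M N : SL2} (h : mobius M = mobius N) : fro M = fro N := by
  obtain ⟨k, hk, he⟩ := eq_or_neg_of_mobius_eq h
  unfold fro
  simp only [he]
  linear_combination (ent N 0 0 ^ 2 + ent N 0 1 ^ 2 + ent N 1 0 ^ 2 + ent N 1 1 ^ 2) * hk

/-- The entries of a matrix divided by its Frobenius norm. -/
def nent (M : SL2) : Fin 2 → Fin 2 → ℝ := fun i j => ent M i j / √(fro M)

lemma nent_mem (M : SL2) (i j : Fin 2) : nent M i j ∈ Icc (-1 : ℝ) 1 := by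
  have hs : 0 < √(fro M) := Real.sqrt_pos.2 (fro_pos M)
  have h : |ent M i j| ≤ √(fro M) := by
    apply Real.abs_le_sqrt
    unfold fro
    fin_cases i <;> fin_cases j <;> simp only [Fin.zero_eta, Fin.mk_one] <;>
      nlinarith [sq_nonneg (ent M 0 0), sq_nonneg (ent M 0 1), sq_nonneg (ent M 1 0),
        sq_nonneg (ent M 1 1)]
  rw [abs_le] at h
  unfold nent
  constructor
  · rw [le_div_iff₀ hs]
    linarith
  · rw [div_le_iff₀ hs]
    linarith

lemma exists_nent_limit {Γ : Type*} (U : Ultrafilter Γ) (M : Γ → SL2) :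
    ∃ T : Fin 2 → Fin 2 → ℝ, ∀ i j, Tendsto (fun γ => nent (M γ) i j) U (𝓝 (T i j)) := by
  have h : ∀ i j, ∃ c : ℝ, Tendsto (fun γ => nent (M γ) i j) U (𝓝 c) := by
    intro i j
    obtain ⟨c, -, hc⟩ := (isCompact_Icc (a := (-1 : ℝ)) (b := 1)).ultrafilter_le_nhds
      (U.map fun γ => nent (M γ) i j) (by
        rw [le_principal_iff]
        exact Ultrafilter.mem_map.2 (univ_mem' fun γ => nent_mem (M γ) i j))
    exact ⟨c, hc⟩
  choose T hT using h
  exact ⟨T, hT⟩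

/-- A nonzero singular `2 × 2` array is a product of a column and a row. -/
lemma exists_rank_one {T : Fin 2 → Fin 2 → ℝ} (hdet : T 0 0 * T 1 1 - T 0 1 * T 1 0 = 0)
    (hne : T 0 0 ^ 2 + T 0 1 ^ 2 + T 1 0 ^ 2 + T 1 1 ^ 2 = 1) :
    ∃ p q : Fin 2 → ℝ, p ≠ 0 ∧ q ≠ 0 ∧ ∀ i j, T i j = p i * q j := by
  by_cases h0 : T 0 0 ^ 2 + T 0 1 ^ 2 = 0
  · have h00 : T 0 0 = 0 := by nlinarith [sq_nonneg (T 0 0), sq_nonneg (T 0 1)]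
    have h01 : T 0 1 = 0 := by nlinarith [sq_nonneg (T 0 0), sq_nonneg (T 0 1)]
    refine ⟨![0, 1], ![T 1 0, T 1 1], by simp, ?_, ?_⟩
    · rw [vec_ne_zero_iff]
      simp only [Matrix.cons_val_zero, Matrix.cons_val_one, Matrix.cons_val_fin_one]
      linarith
    · rw [Fin.forall_fin_two, Fin.forall_fin_two, Fin.forall_fin_two]
      simp [h00, h01]
  · have hp : 0 < T 0 0 ^ 2 + T 0 1 ^ 2 := lt_of_le_of_ne (by positivity) (Ne.symm h0)
    refine ⟨![1, (T 1 0 * T 0 0 + T 1 1 * T 0 1) / (T 0 0 ^ 2 + T 0 1 ^ 2)],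
      ![T 0 0, T 0 1], by simp, ?_, ?_⟩
    · rw [vec_ne_zero_iff]
      simpa using hp
    · rw [Fin.forall_fin_two, Fin.forall_fin_two, Fin.forall_fin_two]
      simp only [Matrix.cons_val_zero, Matrix.cons_val_one, Matrix.cons_val_fin_one, one_mul,
        true_and]
      constructor
      · field_simp
        linear_combination (-T 0 1) * hdet
      · field_simp
        linear_combination (T 0 0) * hdet

/-- If the normalized matrices converge to `p qᵀ`, their projective maps converge to the constant
`[p]`, locally uniformly off the kernel of `q`. -/
lemma tendsto_mobius_of_rank_one {Γ : Type*} {l : Filter Γ} {M : Γ → SL2} {p q : Fin 2 → ℝ}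
    (hp : p ≠ 0) (hT : ∀ i j, Tendsto (fun γ => nent (M γ) i j) l (𝓝 (p i * q j)))
    (v : Fin 2 → ℝ) (hv : v ≠ 0) (hqv : q 0 * v 0 + q 1 * v 1 ≠ 0) :
    Tendsto (fun z : Γ × RP1 => mobius (M z.1) z.2) (l ×ˢ 𝓝 (Projectivization.mk ℝ v hv))
      (𝓝 (Projectivization.mk ℝ p hp)) := by
  obtain ⟨t, ht⟩ := para_surjective (Projectivization.mk ℝ v hv)
  rw [← ht, nhds_para]
  have hqt : q 0 * Real.cos (π * t) + q 1 * Real.sin (π * t) ≠ 0 := by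
    unfold para at ht
    rw [mk_eq_iff_cross] at ht
    simp only [Matrix.cons_val_zero, Matrix.cons_val_one, Matrix.cons_val_fin_one] at ht
    intro h0
    apply hqv
    have hcs := Real.sin_sq_add_cos_sq (π * t)
    linear_combination (v 0 * Real.cos (π * t) + v 1 * Real.sin (π * t)) * h0 -
      (q 0 * v 0 + q 1 * v 1) * hcs +
      (q 1 * Real.cos (π * t) - q 0 * Real.sin (π * t)) * ht
  have hmap : l ×ˢ map para (𝓝 t) = map (Prod.map id para) (l ×ˢ 𝓝 t) := by
    rw [← Filter.prod_map_map_eq']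
    simp
  rw [hmap, tendsto_map'_iff]
  have hs : ∀ γ, 0 < √(fro (M γ)) := fun γ => Real.sqrt_pos.2 (fro_pos _)
  -- the value does not change when the matrix is replaced by its normalization
  have hne : ∀ z : Γ × ℝ, app (nent (M z.1)) ![Real.cos (π * z.2), Real.sin (π * z.2)] ≠ 0 := by
    intro z h
    apply app_ne_zero (M z.1) (cossin_ne_zero z.2)
    have h0 := congrFun h 0
    have h1 := congrFun h 1
    have := (hs z.1).ne'
    simp only [app_zero, app_one, nent, Pi.zero_apply] at h0 h1
    field_simp at h0 h1
    rw [mul_zero] at h0 h1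
    exact vec_ext (by rw [app_zero, Pi.zero_apply]; linarith)
      (by rw [app_one, Pi.zero_apply]; linarith)
  have hlim : Tendsto
      (fun z : Γ × ℝ => app (nent (M z.1)) ![Real.cos (π * z.2), Real.sin (π * z.2)])
      (l ×ˢ 𝓝 t) (𝓝 (app (fun i j => p i * q j) ![Real.cos (π * t), Real.sin (π * t)])) := by
    have hT' : ∀ i j, Tendsto (fun z : Γ × ℝ => nent (M z.1) i j) (l ×ˢ 𝓝 t) (𝓝 (p i * q j)) :=
      fun i j => (hT i j).comp tendsto_fst
    have hc : Tendsto (fun z : Γ × ℝ => Real.cos (π * z.2)) (l ×ˢ 𝓝 t) (𝓝 (Real.cos (π * t))) :=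
      ((by fun_prop : Continuous fun t : ℝ => Real.cos (π * t)).tendsto t).comp tendsto_snd
    have hsn : Tendsto (fun z : Γ × ℝ => Real.sin (π * z.2)) (l ×ˢ 𝓝 t) (𝓝 (Real.sin (π * t))) :=
      ((by fun_prop : Continuous fun t : ℝ => Real.sin (π * t)).tendsto t).comp tendsto_snd
    rw [tendsto_pi_nhds, Fin.forall_fin_two]
    exact ⟨((hT' 0 0).mul hc).add ((hT' 0 1).mul hsn), ((hT' 1 0).mul hc).add ((hT' 1 1).mul hsn)⟩
  have hlim0 : app (fun i j => p i * q j) ![Real.cos (π * t), Real.sin (π * t)] ≠ 0 := by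
    intro h
    have h0 : p 0 * q 0 * Real.cos (π * t) + p 0 * q 1 * Real.sin (π * t) = 0 := congrFun h 0
    have h1 : p 1 * q 0 * Real.cos (π * t) + p 1 * q 1 * Real.sin (π * t) = 0 := congrFun h 1
    apply hp
    apply vec_ext
    · exact mul_right_cancel₀ hqt (by simp only [Pi.zero_apply]; linear_combination h0)
    · exact mul_right_cancel₀ hqt (by simp only [Pi.zero_apply]; linear_combination h1)
  have key := tendsto_mk hne hlim0 hlim
  have e1 : Projectivization.mk ℝ _ hlim0 = Projectivization.mk ℝ p hp := by
    rw [mk_eq_iff_cross, app_zero, app_one]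
    ring
  rw [e1] at key
  refine key.congr fun z => ?_
  simp only [comp_apply, Prod.map, id]
  unfold para
  rw [mobius_mk, mk_eq_iff_cross]
  simp only [app_zero, app_one, nent]
  ring

/-- A family of matrices in `SL(2,ℝ)` diverging along an ultrafilter has north-south dynamics on
the projective line: off a repelling point `r` it converges to an attracting point `a`, and dually
for the inverses. A vector direction is stretched to infinity unless it is `r`. -/
lemma matrix_dynamics {Γ : Type*} (U : Ultrafilter Γ) (M : Γ → SL2)
    (hU : Tendsto (fun γ => fro (M γ)) U atTop) : ∃ a r : RP1,
    (∀ y, y ≠ r → Tendsto (fun z : Γ × RP1 => mobius (M z.1) z.2) (U ×ˢ 𝓝 y) (𝓝 a)) ∧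
    (∀ y, y ≠ a → Tendsto (fun z : Γ × RP1 => mobius (M z.1)⁻¹ z.2) (U ×ˢ 𝓝 y) (𝓝 r)) ∧
    (∀ v hv, Projectivization.mk ℝ v hv ≠ r →
      Tendsto (fun γ => nsq (app (ent (M γ)) v)) U atTop) ∧
    (∀ v hv, Projectivization.mk ℝ v hv = r →
      Tendsto (fun γ => nsq (app (ent (M γ)) v) / fro (M γ)) U (𝓝 0)) := by
  obtain ⟨T, hT⟩ := exists_nent_limit U M
  have hs : ∀ γ, 0 < √(fro (M γ)) := fun γ => Real.sqrt_pos.2 (fro_pos _)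
  have hss : ∀ γ, √(fro (M γ)) ^ 2 = fro (M γ) := fun γ => Real.sq_sqrt (fro_pos _).le
  have hdet : T 0 0 * T 1 1 - T 0 1 * T 1 0 = 0 := by
    have h1 := ((hT 0 0).mul (hT 1 1)).sub ((hT 0 1).mul (hT 1 0))
    have h2 : Tendsto (fun γ => (fro (M γ))⁻¹) U (𝓝 0) := tendsto_inv_atTop_zero.comp hU
    refine tendsto_nhds_unique h1 (h2.congr fun γ => ?_)
    have hd := sl2_det (M γ)
    have h3 := (hs γ).ne'
    rw [← hss γ]
    simp only [nent]
    field_simp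
    linear_combination -hd
  have hsum : T 0 0 ^ 2 + T 0 1 ^ 2 + T 1 0 ^ 2 + T 1 1 ^ 2 = 1 := by
    have h1 := ((((hT 0 0).pow 2).add ((hT 0 1).pow 2)).add ((hT 1 0).pow 2)).add ((hT 1 1).pow 2)
    refine tendsto_nhds_unique h1 (tendsto_const_nhds.congr fun γ => ?_)
    have h3 := (hs γ).ne'
    simp only [nent]
    field_simp
    rw [hss γ]
    rfl
  obtain ⟨p, q, hp, hq, hpq⟩ := exists_rank_one hdet hsum
  have hp' := (vec_ne_zero_iff p).1 hp
  have hq' := (vec_ne_zero_iff q).1 hq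
  have hr : (![-q 1, q 0] : Fin 2 → ℝ) ≠ 0 := by
    rw [vec_ne_zero_iff]
    simp only [Matrix.cons_val_zero, Matrix.cons_val_one, Matrix.cons_val_fin_one]
    linarith
  have hratio : ∀ v : Fin 2 → ℝ, Tendsto (fun γ => nsq (app (ent (M γ)) v) / fro (M γ)) U
      (𝓝 ((p 0 ^ 2 + p 1 ^ 2) * (q 0 * v 0 + q 1 * v 1) ^ 2)) := by
    intro v
    have h1 := ((((hT 0 0).mul_const (v 0)).add ((hT 0 1).mul_const (v 1))).pow 2).add
      ((((hT 1 0).mul_const (v 0)).add ((hT 1 1).mul_const (v 1))).pow 2)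
    have e : (p 0 ^ 2 + p 1 ^ 2) * (q 0 * v 0 + q 1 * v 1) ^ 2 =
      (T 0 0 * v 0 + T 0 1 * v 1) ^ 2 + (T 1 0 * v 0 + T 1 1 * v 1) ^ 2 := by
      simp only [hpq]
      ring
    rw [e]
    refine h1.congr fun γ => ?_
    have h3 := (hs γ).ne'
    rw [← hss γ]
    simp only [nent, nsq, app_zero, app_one]
    field_simp
  have hiff : ∀ v hv, Projectivization.mk ℝ v hv = Projectivization.mk ℝ _ hr ↔
      q 0 * v 0 + q 1 * v 1 = 0 := by
    intro v hv
    rw [mk_eq_iff_cross]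
    simp only [Matrix.cons_val_zero, Matrix.cons_val_one, Matrix.cons_val_fin_one]
    constructor <;> intro h <;> linear_combination h
  refine ⟨Projectivization.mk ℝ p hp, Projectivization.mk ℝ _ hr, ?_, ?_, ?_, ?_⟩
  · intro y hy
    induction y using Projectivization.ind with
    | h v hv =>
      refine tendsto_mobius_of_rank_one hp (fun i j => hpq i j ▸ hT i j) v hv ?_
      rwa [Ne, hiff] at hy
  · intro y hy
    induction y using Projectivization.ind with
    | h v hv =>
      -- the adjugate of `p qᵀ` is again of rank one
      refine tendsto_mobius_of_rank_one (M := fun γ => (M γ)⁻¹) (q := ![-p 1, p 0]) hr ?_ v hv ?_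
      · have hinv := fun γ => inv_entries (M γ)
        rw [Fin.forall_fin_two, Fin.forall_fin_two, Fin.forall_fin_two]
        simp only [nent, fro_inv, Matrix.cons_val_zero, Matrix.cons_val_one,
          Matrix.cons_val_fin_one, fun γ => (hinv γ).1, fun γ => (hinv γ).2.1,
          fun γ => (hinv γ).2.2.1, fun γ => (hinv γ).2.2.2]
        refine ⟨⟨?_, ?_⟩, ?_, ?_⟩
        · have := hT 1 1
          rw [hpq] at this
          convert this using 2
          all_goals first | rfl | ring
        · have := (hT 0 1).neg
          rw [hpq] at this
          convert this using 2
          · simp only [nent]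
            ring
          · ring
        · have := (hT 1 0).neg
          rw [hpq] at this
          convert this using 2
          · simp only [nent]
            ring
          · ring
        · have := hT 0 0
          rw [hpq] at this
          convert this using 2
          all_goals first | rfl | ring
      · rw [Ne, mk_eq_iff_cross] at hy
        simp only [Matrix.cons_val_zero, Matrix.cons_val_one, Matrix.cons_val_fin_one]
        intro h
        apply hy
        linear_combination -h
  · intro v hv hvr
    rw [Ne, hiff] at hvr
    have hpos : 0 < (p 0 ^ 2 + p 1 ^ 2) * (q 0 * v 0 + q 1 * v 1) ^ 2 := by positivity
    refine (hU.atTop_mul_pos hpos (hratio v)).congr fun γ => ?_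
    have := (fro_pos (M γ)).ne'
    field_simp
  · intro v hv hvr
    rw [hiff] at hvr
    have := hratio v
    rwa [hvr, zero_pow two_ne_zero, mul_zero] at this

/-! ### Points of the hyperbolic plane as quadratic forms -/

section Hyperbolic

open scoped UpperHalfPlane

/-- The positive definite quadratic form of determinant one attached to a point of the upper half
plane; `SL(2,ℝ)` acts compatibly on points and on forms. -/
def qform (z : ℍ) (v : Fin 2 → ℝ) : ℝ := ((v 0 - z.re * v 1) ^ 2 + (z.im * v 1) ^ 2) / z.im

/-- The trace of the form attached to `z`. -/
def qtrace (z : ℍ) : ℝ := (1 + z.re ^ 2 + z.im ^ 2) / z.im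

lemma qform_smul (M : SL2) (z : ℍ) (v : Fin 2 → ℝ) :
    qform (M • z) (app (ent M) v) = qform z v := by
  have hco := UpperHalfPlane.coe_specialLinearGroup_apply M z
  have hY := (M • z).im_pos
  have hy := z.im_pos
  have hd := sl2_det M
  have e00 : algebraMap ℝ ℝ (M 0 0) = ent M 0 0 := rfl
  have e01 : algebraMap ℝ ℝ (M 0 1) = ent M 0 1 := rfl
  have e10 : algebraMap ℝ ℝ (M 1 0) = ent M 1 0 := rfl
  have e11 : algebraMap ℝ ℝ (M 1 1) = ent M 1 1 := rfl
  rw [e00, e01, e10, e11] at hco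
  have hden : (ent M 1 0 : ℂ) * z + (ent M 1 1 : ℂ) ≠ 0 := by
    intro h0
    rw [h0, div_zero] at hco
    have h1 := congrArg Complex.im hco
    rw [UpperHalfPlane.coe_im, Complex.zero_im] at h1
    exact hY.ne' h1
  rw [eq_div_iff hden] at hco
  have h1 := congrArg Complex.re hco
  have h2 := congrArg Complex.im hco
  simp only [Complex.mul_re, Complex.mul_im, Complex.add_re, Complex.add_im, Complex.ofReal_re,
    Complex.ofReal_im, UpperHalfPlane.coe_re, UpperHalfPlane.coe_im, zero_mul, sub_zero,
    add_zero] at h1 h2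
  unfold qform
  simp only [app_zero, app_one]
  generalize (M • z).re = X at *
  generalize (M • z).im = Y at *
  generalize z.re = x at *
  generalize z.im = y at *
  generalize ent M 0 0 = a at *
  generalize ent M 0 1 = b at *
  generalize ent M 1 0 = c at *
  generalize ent M 1 1 = d at *
  generalize v 0 = s at *
  generalize v 1 = t at *
  have hD : Y * ((c * x + d) ^ 2 + (c * y) ^ 2) = y := by
    linear_combination (c * x + d) * h2 - c * y * h1 + y * hd
  have k1 : (a * s + b * t - X * (c * s + d * t)) * (c * x + d) + Y * (c * s + d * t) * (c * y) =
      s - x * t := by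
    linear_combination (-(c * s + d * t)) * h1 + (s - x * t) * hd
  have k2 : (a * s + b * t - X * (c * s + d * t)) * (c * y) - Y * (c * s + d * t) * (c * x + d) =
      -(y * t) := by
    linear_combination (-(c * s + d * t)) * h2 + (-(y * t)) * hd
  rw [div_eq_div_iff hY.ne' hy.ne']
  linear_combination Y * ((a * s + b * t - X * (c * s + d * t)) * (c * x + d) +
    Y * (c * s + d * t) * (c * y) + (s - x * t)) * k1 +
    Y * ((a * s + b * t - X * (c * s + d * t)) * (c * y) -
    Y * (c * s + d * t) * (c * x + d) - (y * t)) * k2 -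
    ((a * s + b * t - X * (c * s + d * t)) ^ 2 + (Y * (c * s + d * t)) ^ 2) * hD

lemma qform_smul' (M : SL2) (z : ℍ) (v : Fin 2 → ℝ) :
    qform (M • z) v = qform z (app (ent M⁻¹) v) := by
  rw [← qform_smul M z, app_inv]

lemma qform_I (v : Fin 2 → ℝ) : qform UpperHalfPlane.I v = nsq v := by
  simp [qform, nsq]

lemma qform_pos (z : ℍ) {v : Fin 2 → ℝ} (hv : v ≠ 0) : 0 < qform z v := by
  have hy := z.im_pos
  unfold qform
  apply div_pos _ hy
  by_cases h1 : v 1 = 0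
  · have h0 : v 0 ≠ 0 := by
      intro h0
      exact hv (vec_ext h0 h1)
    rw [h1]
    simp only [mul_zero, sub_zero]
    positivity
  · positivity

lemma qtrace_pos (z : ℍ) : 0 < qtrace z := by
  have hy := z.im_pos
  unfold qtrace
  positivity

lemma qtrace_eq_cosh (z : ℍ) : qtrace z = 2 * Real.cosh (dist UpperHalfPlane.I z) := by
  have hy := z.im_pos
  rw [UpperHalfPlane.cosh_dist']
  unfold qtrace
  simp only [UpperHalfPlane.I_re, UpperHalfPlane.I_im]
  field_simp
  ring

lemma qform_le (z : ℍ) (v : Fin 2 → ℝ) : qform z v ≤ qtrace z * nsq v := by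
  have hy := z.im_pos
  unfold qform qtrace nsq
  rw [div_mul_eq_mul_div, div_le_div_iff_of_pos_right hy]
  nlinarith [sq_nonneg (v 1 + z.re * v 0), sq_nonneg (z.im * v 0)]

lemma nsq_le (z : ℍ) (v : Fin 2 → ℝ) : nsq v ≤ qtrace z * qform z v := by
  have hy := z.im_pos
  unfold qform qtrace nsq
  rw [div_mul_div_comm, le_div_iff₀ (by positivity)]
  nlinarith [sq_nonneg (v 0 - z.re * v 1),
    sq_nonneg (-z.re * v 0 + (z.re ^ 2 + z.im ^ 2) * v 1)]

lemma fro_eq_cosh (M : SL2) :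
    fro M = 2 * Real.cosh (dist UpperHalfPlane.I (M • UpperHalfPlane.I)) := by
  rw [← qtrace_eq_cosh, ← fro_inv]
  have h0 := qform_smul' M UpperHalfPlane.I ![1, 0]
  have h1 := qform_smul' M UpperHalfPlane.I ![0, 1]
  rw [qform_I] at h0 h1
  have hy := (M • UpperHalfPlane.I).im_pos
  have e : qtrace (M • UpperHalfPlane.I) =
      qform (M • UpperHalfPlane.I) ![1, 0] + qform (M • UpperHalfPlane.I) ![0, 1] := by
    unfold qtrace qform
    simp only [Matrix.cons_val_zero, Matrix.cons_val_one, Matrix.cons_val_fin_one]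
    field_simp
    ring
  rw [e, h0, h1]
  unfold fro nsq
  simp only [app_zero, app_one, Matrix.cons_val_zero, Matrix.cons_val_one,
    Matrix.cons_val_fin_one]
  ring

lemma fro_le_cosh (M : SL2) (c : ℍ) :
    fro M ≤ 4 * Real.exp (2 * dist UpperHalfPlane.I c) * Real.cosh (dist c (M • c)) := by
  have h1 : dist UpperHalfPlane.I (M • UpperHalfPlane.I) ≤
      2 * dist UpperHalfPlane.I c + dist c (M • c) := by
    have t1 := dist_triangle UpperHalfPlane.I c (M • UpperHalfPlane.I)
    have t2 := dist_triangle c (M • c) (M • UpperHalfPlane.I)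
    rw [dist_smul, dist_comm c UpperHalfPlane.I] at t2
    linarith
  have h2 : ∀ t : ℝ, 0 ≤ t → Real.cosh t ≤ Real.exp t := by
    intro t ht
    rw [← Real.cosh_add_sinh]
    linarith [Real.sinh_nonneg_iff.2 ht]
  have h3 : ∀ t : ℝ, Real.exp t ≤ 2 * Real.cosh t := by
    intro t
    rw [Real.cosh_eq]
    linarith [Real.exp_pos (-t)]
  have h4 := h2 _ (dist_nonneg (x := UpperHalfPlane.I) (y := M • UpperHalfPlane.I))
  have h5 := Real.exp_le_exp.2 h1
  rw [Real.exp_add] at h5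
  have h6 := mul_le_mul_of_nonneg_left (h3 (dist c (M • c)))
    (Real.exp_pos (2 * dist UpperHalfPlane.I c)).le
  rw [fro_eq_cosh]
  linarith

/-- The points of the geodesic segment `[c, w]` correspond to the (normalized) positive
combinations of the forms of `c` and `w`. -/
lemma exists_hyp_between (c w : ℍ) {b : ℝ} (hb : 0 < b) : ∃ m : ℍ,
    dist c m + dist m w = dist c w ∧ ∀ v, qform m v =
      (qform c v + b * qform w v) / √(1 + b ^ 2 + 2 * b * Real.cosh (dist c w)) := by
  have hyc := c.im_pos
  have hyw := w.im_pos
  set Δ := Real.cosh (dist c w) with hΔ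
  have hΔ1 : 1 ≤ Δ := Real.one_le_cosh _
  set s := √(1 + b ^ 2 + 2 * b * Δ) with hs
  have hpos : 0 < 1 + b ^ 2 + 2 * b * Δ := by positivity
  have hs0 : 0 < s := Real.sqrt_pos.2 hpos
  have hs2 : s ^ 2 = 1 + b ^ 2 + 2 * b * Δ := Real.sq_sqrt hpos.le
  have hP : 0 < w.im + b * c.im := by positivity
  have him : 0 < s * c.im * w.im / (w.im + b * c.im) := by positivity
  obtain ⟨m, hmre, hmim⟩ : ∃ m : ℍ,
      m.re = (c.re * w.im + b * w.re * c.im) / (w.im + b * c.im) ∧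
      m.im = s * c.im * w.im / (w.im + b * c.im) :=
    ⟨UpperHalfPlane.mk ⟨_, _⟩ him, rfl, rfl⟩
  have hΔe : 2 * c.im * w.im * Δ = (c.re - w.re) ^ 2 + c.im ^ 2 + w.im ^ 2 := by
    rw [hΔ, UpperHalfPlane.cosh_dist']
    field_simp
  -- clearing denominators in the definition of the normalizing factor
  have hs3 : s ^ 2 * c.im * w.im = c.im * w.im * (1 + b ^ 2) +
      b * ((c.re - w.re) ^ 2 + c.im ^ 2 + w.im ^ 2) := by
    rw [hs2]
    linear_combination b * hΔe
  refine ⟨m, ?_, ?_⟩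
  · have c1 : Real.cosh (dist c m) = (1 + b * Δ) / s := by
      rw [hΔ, UpperHalfPlane.cosh_dist', UpperHalfPlane.cosh_dist', hmre, hmim]
      field_simp
      linear_combination (c.im * w.im) * hs3
    have c2 : Real.cosh (dist m w) = (Δ + b) / s := by
      rw [hΔ, UpperHalfPlane.cosh_dist', UpperHalfPlane.cosh_dist', hmre, hmim]
      field_simp
      linear_combination (c.im * w.im) * hs3
    have hsd : 0 ≤ Real.sinh (dist c w) := Real.sinh_nonneg_iff.2 dist_nonneg
    have hsd2 : Real.sinh (dist c w) ^ 2 = Δ ^ 2 - 1 := Real.sinh_sq _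
    have s1 : Real.sinh (dist c m) = b * Real.sinh (dist c w) / s := by
      rw [← sq_eq_sq₀ (Real.sinh_nonneg_iff.2 dist_nonneg) (by positivity), Real.sinh_sq, c1]
      field_simp
      rw [hsd2, hs2]
      ring
    have s2 : Real.sinh (dist m w) = Real.sinh (dist c w) / s := by
      rw [← sq_eq_sq₀ (Real.sinh_nonneg_iff.2 dist_nonneg) (by positivity), Real.sinh_sq, c2]
      field_simp
      rw [hsd2, hs2]
      ring
    apply Real.cosh_injOn (mem_Ici.2 (by positivity)) (mem_Ici.2 dist_nonneg)
    rw [Real.cosh_add, c1, c2, s1, s2, ← hΔ]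
    field_simp
    rw [hsd2, hs2]
    ring
  · intro v
    unfold qform
    rw [hmre, hmim]
    field_simp
    linear_combination (v 1 ^ 2 * c.im * w.im) * hs3

/-- A form which is much smaller at `w` than expected from the distance of `w` to `c` becomes small
somewhere on the segment `[c, w]`. -/
lemma exists_between_small (c w : ℍ) {v : Fin 2 → ℝ} (hv : v ≠ 0) : ∃ m : ℍ,
    dist c m + dist m w = dist c w ∧
    qform m v ^ 2 * Real.cosh (dist c w) ≤ 2 * qform c v * qform w v := by
  have hA := qform_pos c hv
  have hB := qform_pos w hv
  obtain ⟨m, hm, hq⟩ := exists_hyp_between c w (div_pos hA hB)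
  refine ⟨m, hm, ?_⟩
  have hΔ1 : 1 ≤ Real.cosh (dist c w) := Real.one_le_cosh _
  rw [hq v]
  generalize qform c v = A at *
  generalize qform w v = B at *
  generalize Real.cosh (dist c w) = Δ at *
  have hpos : 0 < 1 + (A / B) ^ 2 + 2 * (A / B) * Δ := by positivity
  rw [div_pow, Real.sq_sqrt hpos.le, div_mul_eq_mul_div, div_le_iff₀ hpos]
  have e : (A + A / B * B) ^ 2 * Δ = 4 * A ^ 2 * Δ := by
    field_simp
    ring
  have e2 : 2 * A * B * (1 + (A / B) ^ 2 + 2 * (A / B) * Δ) =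
      2 * A * B * (1 + (A / B) ^ 2) + 4 * A ^ 2 * Δ := by
    field_simp
    ring
  rw [e, e2]
  have : 0 ≤ 2 * A * B * (1 + (A / B) ^ 2) := by positivity
  linarith

lemma exists_qtrace_bound {K : Set ℍ} (hK : IsCompact K) : ∃ T : ℝ, 0 < T ∧ ∀ k ∈ K, qtrace k ≤ T := by
  have hc : Continuous qtrace := by
    have : qtrace = fun z => 2 * Real.cosh (dist UpperHalfPlane.I z) := funext qtrace_eq_cosh
    rw [this]
    exact continuous_const.mul (Real.continuous_cosh.comp (continuous_const.dist continuous_id))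
  obtain ⟨T, hT⟩ := (hK.image hc).bddAbove
  exact ⟨max T 1, by positivity, fun k hk => (hT ⟨k, hk, rfl⟩).trans (le_max_left _ _)⟩

/-- Proper discontinuity on the hyperbolic plane forces the matrices to leave every bounded set. -/
lemma tendsto_fro_of_proper {Γ : Type*} (M : Γ → SL2)
    (hprop : ∀ K : Set ℍ, IsCompact K →
      {γ : Γ | (((fun z : ℍ => M γ • z) '' K) ∩ K).Nonempty}.Finite) :
    Tendsto (fun γ => fro (M γ)) cofinite atTop := by
  rw [tendsto_atTop]
  intro R
  have hfin := hprop (Metric.closedBall UpperHalfPlane.I (max R 0)) (isCompact_closedBall _ _)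
  rw [eventually_cofinite]
  refine hfin.subset fun γ hγ => ?_
  simp only [mem_ofPred_eq, not_le] at hγ
  refine ⟨M γ • UpperHalfPlane.I, ⟨UpperHalfPlane.I, ?_, rfl⟩, ?_⟩
  · exact Metric.mem_closedBall_self (le_max_right _ _)
  · rw [Metric.mem_closedBall, dist_comm]
    refine le_trans ?_ (le_max_left _ _)
    rw [fro_eq_cosh, Real.cosh_eq] at hγ
    have h1 := Real.add_one_le_exp (dist UpperHalfPlane.I (M γ • UpperHalfPlane.I))
    have h2 := Real.exp_pos (-dist UpperHalfPlane.I (M γ • UpperHalfPlane.I))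
    linarith

end Hyperbolic

/-! ### Convex cocompact groups act cocompactly off their limit set -/

section Fuchsian

open scoped UpperHalfPlane

/-- The factor by which a matrix scales the squared norm of the vectors of a given direction. -/
def stretch (M : SL2) (x : RP1) : ℝ := nsq (app (ent M) x.rep) / nsq x.rep

lemma stretch_mk (M : SL2) (v : Fin 2 → ℝ) (hv : v ≠ 0) :
    stretch M (Projectivization.mk ℝ v hv) = nsq (app (ent M) v) / nsq v := by
  obtain ⟨c, hc⟩ := Projectivization.exists_smul_eq_mk_rep ℝ v hv
  unfold stretch
  rw [← hc]
  have hc0 : (c : ℝ) ≠ 0 := c.ne_zero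
  have hn := (nsq_pos hv).ne'
  have hn' := (nsq_pos (smul_ne_zero hc0 hv)).ne'
  have e : c • v = (c : ℝ) • v := rfl
  rw [e, div_eq_div_iff hn' hn]
  simp only [nsq, app_zero, app_one, Pi.smul_apply, smul_eq_mul]
  ring

lemma stretch_pos (M : SL2) (x : RP1) : 0 < stretch M x :=
  div_pos (nsq_pos (app_ne_zero M x.rep_nonzero)) (nsq_pos x.rep_nonzero)

lemma stretch_congr {M N : SL2} (h : mobius M = mobius N) (x : RP1) : stretch M x = stretch N x := by
  unfold stretch
  rw [nsq_app_eq_of_mobius_eq h]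

lemma stretch_mul (M N : SL2) (x : RP1) :
    stretch (M * N) x = stretch M (mobius N x) * stretch N x := by
  induction x using Projectivization.ind with
  | h v hv =>
    rw [mobius_mk, stretch_mk, stretch_mk, stretch_mk, app_mul]
    have h1 := (nsq_pos hv).ne'
    have h2 := (nsq_pos (app_ne_zero N hv)).ne'
    field_simp

lemma stretch_para (M : SL2) (t : ℝ) :
    stretch M (para t) = nsq (app (ent M) ![Real.cos (π * t), Real.sin (π * t)]) := by
  unfold para
  rw [stretch_mk]
  have : nsq ![Real.cos (π * t), Real.sin (π * t)] = 1 := by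
    simp [nsq]
  rw [this, div_one]

lemma continuous_stretch (M : SL2) : Continuous (stretch M) := by
  rw [isQuotientMap_para.continuous_iff]
  have : stretch M ∘ para =
      fun t => nsq (app (ent M) ![Real.cos (π * t), Real.sin (π * t)]) :=
    funext fun t => stretch_para M t
  rw [this]
  simp only [nsq, app_zero, app_one, Matrix.cons_val_zero, Matrix.cons_val_one,
    Matrix.cons_val_fin_one]
  fun_prop

/-- The directions whose stretch by a suitable matrix of the family is an arbitrarily small fraction
of the squared norm of that matrix. -/
def contractedSet {Γ : Type*} (M : Γ → SL2) : Set RP1 :=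
  {x | ∀ ε > 0, ∃ γ, stretch (M γ) x < ε * fro (M γ)}

lemma isClosed_contractedSet {Γ : Type*} (M : Γ → SL2) : IsClosed (contractedSet M) := by
  rw [← isQuotientMap_para.isClosed_preimage, ← closure_subset_iff_isClosed]
  intro t ht ε hε
  have hc : Continuous fun t' : ℝ => (Real.cos (π * t) - Real.cos (π * t')) ^ 2 +
      (Real.sin (π * t) - Real.sin (π * t')) ^ 2 := by fun_prop
  have hnear : {t' : ℝ | (Real.cos (π * t) - Real.cos (π * t')) ^ 2 +
      (Real.sin (π * t) - Real.sin (π * t')) ^ 2 < ε / 4} ∈ 𝓝 t := by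
    refine (isOpen_lt hc continuous_const).mem_nhds ?_
    simp only [mem_ofPred_eq, sub_self]
    norm_num
    exact hε
  obtain ⟨t', h1, h2⟩ := mem_closure_iff_nhds.1 ht _ hnear
  obtain ⟨γ, hγ⟩ := h2 (ε / 4) (by positivity)
  refine ⟨γ, ?_⟩
  simp only [mem_ofPred_eq] at h1
  rw [stretch_para] at hγ ⊢
  have hf := fro_pos (M γ)
  have h3 := nsq_app_le (M γ)
    ![Real.cos (π * t) - Real.cos (π * t'), Real.sin (π * t) - Real.sin (π * t')]
  have h4 := mul_lt_mul_of_pos_left h1 hf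
  simp only [nsq, app_zero, app_one, Matrix.cons_val_zero, Matrix.cons_val_one,
    Matrix.cons_val_fin_one] at hγ h3 h4 ⊢
  generalize ent (M γ) 0 0 = a at *
  generalize ent (M γ) 0 1 = b at *
  generalize ent (M γ) 1 0 = c at *
  generalize ent (M γ) 1 1 = d at *
  generalize Real.cos (π * t) = C at *
  generalize Real.sin (π * t) = S at *
  generalize Real.cos (π * t') = C' at *
  generalize Real.sin (π * t') = S' at *
  have q1 := sq_nonneg ((a * C' + b * S') - (a * (C - C') + b * (S - S')))
  have q2 := sq_nonneg ((c * C' + d * S') - (c * (C - C') + d * (S - S')))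
  nlinarith

variable {Γ : Type*} [Group Γ] {ρ : Γ →* Equiv.Perm RP1} {M : Γ → SL2} {L : Set RP1}

lemma symm_eq_mobius_inv (hM : ∀ γ, ⇑(ρ γ) = mobius (M γ)) (γ : Γ) :
    ⇑(ρ γ).symm = mobius (M γ)⁻¹ := by
  funext x
  rw [Equiv.symm_apply_eq, hM, mobius_inv_apply]

lemma mobius_rep_inv (hM : ∀ γ, ⇑(ρ γ) = mobius (M γ)) (γ : Γ) :
    mobius (M γ)⁻¹ = mobius (M γ⁻¹) := by
  rw [← symm_eq_mobius_inv hM, ← hM, map_inv]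
  rfl

lemma mobius_rep_mul (hM : ∀ γ, ⇑(ρ γ) = mobius (M γ)) (γ g : Γ) :
    mobius (M (γ * g)) = mobius (M γ * M g) := by
  funext x
  rw [mobius_mul, ← hM, ← hM, ← hM, map_mul]
  rfl

lemma stretch_rep_mul (hM : ∀ γ, ⇑(ρ γ) = mobius (M γ)) (γ g : Γ) (x : RP1) :
    stretch (M (γ * g)) x = stretch (M γ) (ρ g x) * stretch (M g) x := by
  rw [stretch_congr (mobius_rep_mul hM γ g), stretch_mul, hM]

/-- The dynamics of a diverging family of elements of the group; invariance of the limit set puts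
both the attracting and the repelling point in it. -/
lemma rep_dynamics (hM : ∀ γ, ⇑(ρ γ) = mobius (M γ))
    (hfro : Tendsto (fun γ => fro (M γ)) cofinite atTop) (hLc : IsClosed L)
    (hLinv : ∀ γ x, ρ γ x ∈ L ↔ x ∈ L) (hLnt : L.Nontrivial)
    (U : Ultrafilter Γ) (hU : ↑U ≤ (cofinite : Filter Γ)) : ∃ a ∈ L, ∃ r ∈ L,
    (∀ y, y ≠ r → Tendsto (fun z : Γ × RP1 => ρ z.1 z.2) (U ×ˢ 𝓝 y) (𝓝 a)) ∧
    (∀ y, y ≠ a → Tendsto (fun z : Γ × RP1 => (ρ z.1).symm z.2) (U ×ˢ 𝓝 y) (𝓝 r)) ∧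
    (∀ x, x ≠ r → Tendsto (fun γ => stretch (M γ) x) U atTop) ∧
    Tendsto (fun γ => stretch (M γ) r / fro (M γ)) U (𝓝 0) := by
  obtain ⟨a, r, h1, h2, h3, h4⟩ := matrix_dynamics U M (hfro.mono_left hU)
  simp only [← hM, ← symm_eq_mobius_inv hM] at h1 h2
  have hpt : ∀ p : RP1, Tendsto (fun γ : Γ => (γ, p)) U (U ×ˢ 𝓝 p) :=
    fun p => tendsto_id.prodMk tendsto_const_nhds
  refine ⟨a, ?_, r, ?_, h1, h2, ?_, ?_⟩
  · obtain ⟨p, hp, hpr⟩ := hLnt.exists_ne r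
    exact hLc.mem_of_tendsto ((h1 p hpr).comp (hpt p))
      (Eventually.of_forall fun γ => (hLinv γ p).2 hp)
  · obtain ⟨p, hp, hpa⟩ := hLnt.exists_ne a
    refine hLc.mem_of_tendsto ((h2 p hpa).comp (hpt p)) (Eventually.of_forall fun γ => ?_)
    have := hLinv γ ((ρ γ).symm p)
    rw [Equiv.apply_symm_apply] at this
    exact this.1 hp
  · intro x hx
    induction x using Projectivization.ind with
    | h v hv =>
      simp only [stretch_mk]
      exact (h3 v hv hx).atTop_div_const (nsq_pos hv)
  · induction r using Projectivization.ind with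
    | h v hv =>
      simp only [stretch_mk]
      have := (h4 v hv rfl).div_const (nsq v)
      rw [zero_div] at this
      refine this.congr fun γ => ?_
      rw [div_right_comm]

/-- `contractedSet M` is closed and invariant, and it contains the repelling point of any diverging
family, so minimality of the limit set applies. -/
lemma subset_contractedSet [Infinite Γ] (hM : ∀ γ, ⇑(ρ γ) = mobius (M γ))
    (hfro : Tendsto (fun γ => fro (M γ)) cofinite atTop) (hL : IsLimitSet ρ L)
    (hLinv : ∀ γ x, ρ γ x ∈ L ↔ x ∈ L) (hLnt : L.Nontrivial) : L ⊆ contractedSet M := by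
  have hinv : ∀ g x, x ∈ contractedSet M → ρ g x ∈ contractedSet M := by
    intro g x hx ε hε
    have hs := stretch_pos (M g) x
    have hf := fro_pos (M g)
    obtain ⟨γ, hγ⟩ := hx (ε * stretch (M g) x / fro (M g)) (by positivity)
    refine ⟨γ * g⁻¹, ?_⟩
    have e1 : stretch (M γ) x = stretch (M (γ * g⁻¹)) (ρ g x) * stretch (M g) x := by
      rw [← stretch_rep_mul hM, inv_mul_cancel_right]
    have e2 : fro (M γ) ≤ fro (M (γ * g⁻¹)) * fro (M g) := by
      have : mobius (M γ) = mobius (M (γ * g⁻¹) * M g) := by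
        rw [← mobius_rep_mul hM, inv_mul_cancel_right]
      rw [fro_eq_of_mobius_eq this]
      exact fro_mul_le _ _
    rw [e1, div_mul_eq_mul_div, lt_div_iff₀ hf] at hγ
    have h5 := mul_le_mul_of_nonneg_left e2 (mul_pos hε hs).le
    have h6 : stretch (M (γ * g⁻¹)) (ρ g x) * (stretch (M g) x * fro (M g)) <
        ε * fro (M (γ * g⁻¹)) * (stretch (M g) x * fro (M g)) := by
      calc _ = stretch (M (γ * g⁻¹)) (ρ g x) * stretch (M g) x * fro (M g) := by ring
        _ < ε * stretch (M g) x * fro (M γ) := hγ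
        _ ≤ ε * stretch (M g) x * (fro (M (γ * g⁻¹)) * fro (M g)) := h5
        _ = _ := by ring
    exact lt_of_mul_lt_mul_right h6 (by positivity)
  refine hL.2.2.2 _ ?_ (isClosed_contractedSet M) fun g => ?_
  · obtain ⟨a, -, r, -, -, -, -, hr⟩ :=
      rep_dynamics hM hfro hL.2.1 hLinv hLnt (hyperfilter Γ) hyperfilter_le_cofinite
    refine ⟨r, fun ε hε => ?_⟩
    obtain ⟨γ, hγ⟩ := (hr.eventually_lt_const hε).exists
    exact ⟨γ, (div_lt_iff₀ (fro_pos _)).1 hγ⟩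
  · apply Subset.antisymm
    · rintro _ ⟨x, hx, rfl⟩
      exact hinv g x hx
    · intro x hx
      refine ⟨ρ g⁻¹ x, hinv _ _ hx, ?_⟩
      rw [map_inv]
      exact Equiv.apply_symm_apply _ _

/-- The Dirichlet-type domain of directions which no element of the group contracts. -/
def uncontracted (M : Γ → SL2) : Set RP1 := {x | ∀ γ, 1 ≤ stretch (M γ) x}

/-- A direction `x = [v]` of `contractedSet M` is genuinely contracted by some element. If `γ` makes
`v` small relative to its norm, then on the segment from `c` to `γ⁻¹ c` there is a point `m` whose
form is small at `v`. The segment lies in the convex set `C`, so `m = g k` with `k` in the compact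
set `K`, and the form of `k` is comparable to the Euclidean one: `g⁻¹` shortens `v`. -/
lemma exists_contracting (hM : ∀ γ, ⇑(ρ γ) = mobius (M γ)) {C K : Set ℍ} (hCne : C.Nonempty)
    (hconv : HypConvex C) (hCinv : ∀ γ, ∀ z ∈ C, M γ • z ∈ C) (hK : IsCompact K)
    (hCK : ∀ z ∈ C, ∃ γ, ∃ k ∈ K, M γ • k = z) {x : RP1} (hx : x ∈ contractedSet M) :
    ∃ γ, stretch (M γ) x < 1 := by
  obtain ⟨c, hc⟩ := hCne
  obtain ⟨T, hT, hTK⟩ := exists_qtrace_bound hK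
  induction x using Projectivization.ind with
  | h v hv =>
    have hn := nsq_pos hv
    have hτ := qtrace_pos c
    set E := Real.exp (2 * dist UpperHalfPlane.I c) with hE
    have hE0 : 0 < E := Real.exp_pos _
    obtain ⟨γ, hγ⟩ := hx (1 / (8 * E * qtrace c ^ 2 * T ^ 2)) (by positivity)
    rw [stretch_mk, div_lt_iff₀ hn] at hγ
    obtain ⟨m, hm, hq⟩ := exists_between_small c (M γ⁻¹ • c) hv
    have hmC : m ∈ C := hconv c hc _ (hCinv _ c hc) m hm
    have hinv : ∀ g : Γ, nsq (app (ent (M g⁻¹)⁻¹) v) = nsq (app (ent (M g)) v) := by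
      intro g
      apply nsq_app_eq_of_mobius_eq
      rw [mobius_rep_inv hM, inv_inv]
    have hfr : fro (M γ⁻¹) = fro (M γ) := by
      rw [← fro_eq_of_mobius_eq (mobius_rep_inv hM γ), fro_inv]
    have hA := qform_le c v
    have hB : qform (M γ⁻¹ • c) v ≤ qtrace c * nsq (app (ent (M γ)) v) := by
      rw [qform_smul', ← hinv]
      exact qform_le c _
    have hch := fro_le_cosh (M γ⁻¹) c
    rw [hfr, ← hE] at hch
    have hf := fro_pos (M γ)
    have hA0 := qform_pos c hv
    have hB0 := qform_pos (M γ⁻¹ • c) hv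
    have hm0 := qform_pos m hv
    -- the form of `m` is smaller at `v` than every form attached to the compact piece can allow
    have hsmall : T * qform m v < nsq v := by
      have h1 : qform m v ^ 2 * fro (M γ) <
          fro (M γ) * (nsq v / T) ^ 2 := by
        calc qform m v ^ 2 * fro (M γ)
            ≤ qform m v ^ 2 * (4 * E * Real.cosh (dist c (M γ⁻¹ • c))) := by gcongr
          _ = 4 * E * (qform m v ^ 2 * Real.cosh (dist c (M γ⁻¹ • c))) := by ring
          _ ≤ 4 * E * (2 * qform c v * qform (M γ⁻¹ • c) v) := by gcongr
          _ ≤ 4 * E * (2 * (qtrace c * nsq v) * (qtrace c * nsq (app (ent (M γ)) v))) := by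
              gcongr
          _ < 4 * E * (2 * (qtrace c * nsq v) * (qtrace c *
                (1 / (8 * E * qtrace c ^ 2 * T ^ 2) * fro (M γ) * nsq v))) := by gcongr
          _ = fro (M γ) * (nsq v / T) ^ 2 := by
              field_simp
              ring
      have h2 : qform m v ^ 2 < (nsq v / T) ^ 2 := by
        rw [mul_comm] at h1
        exact lt_of_mul_lt_mul_left h1 hf.le
      have h3 := lt_of_pow_lt_pow_left₀ 2 (by positivity) h2
      rw [lt_div_iff₀ hT] at h3
      linarith
    obtain ⟨g, k, hk, rfl⟩ := hCK m hmC
    refine ⟨g⁻¹, ?_⟩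
    rw [stretch_mk, div_lt_one hn]
    rw [qform_smul'] at hsmall hm0
    have e : nsq (app (ent (M g)⁻¹) v) = nsq (app (ent (M g⁻¹)) v) :=
      nsq_app_eq_of_mobius_eq (mobius_rep_inv hM g) v
    have h5 := nsq_le k (app (ent (M g)⁻¹) v)
    rw [e] at h5
    calc _ ≤ _ := h5
      _ ≤ T * qform k (app (ent (M g)⁻¹) v) := by gcongr; exact hTK k hk
      _ < nsq v := hsmall

/-- The set `uncontracted M` is a closed set disjoint from `L` which meets every orbit off `L`: move
`x` by an element minimizing the stretch at `x`, which exists because the stretches tend to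
infinity. -/
lemma isCocompactOff_of_matrices [Infinite Γ] (hM : ∀ γ, ⇑(ρ γ) = mobius (M γ))
    (hfro : Tendsto (fun γ => fro (M γ)) cofinite atTop) (hL : IsLimitSet ρ L)
    (hLinv : ∀ γ x, ρ γ x ∈ L ↔ x ∈ L) (hLnt : L.Nontrivial) {C K : Set ℍ} (hCne : C.Nonempty)
    (hconv : HypConvex C) (hCinv : ∀ γ, ∀ z ∈ C, M γ • z ∈ C) (hK : IsCompact K)
    (hCK : ∀ z ∈ C, ∃ γ, ∃ k ∈ K, M γ • k = z) : IsCocompactOff ρ L := by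
  refine ⟨uncontracted M, ?_, ?_, ?_⟩
  · have : uncontracted M = ⋂ γ, {x | 1 ≤ stretch (M γ) x} := by
      ext x
      simp [uncontracted]
    rw [this]
    exact isClosed_iInter fun γ => isClosed_le continuous_const (continuous_stretch _)
  · rw [disjoint_left]
    intro x hx hxL
    obtain ⟨γ, hγ⟩ := exists_contracting hM hCne hconv hCinv hK hCK
      (subset_contractedSet hM hfro hL hLinv hLnt hxL)
    exact absurd (hx γ) (not_le.2 hγ)
  · intro x hx
    have ht : Tendsto (fun γ => stretch (M γ) x) cofinite atTop := by
      rw [tendsto_iff_ultrafilter]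
      intro U hU
      obtain ⟨a, -, r, hr, -, -, h3, -⟩ := rep_dynamics hM hfro hL.2.1 hLinv hLnt U hU
      exact h3 x fun h => hx (h ▸ hr)
    obtain ⟨γ₀, hmin⟩ := ht.exists_forall_le
    refine ⟨γ₀, fun γ => ?_⟩
    have h1 := hmin (γ * γ₀)
    rw [stretch_rep_mul hM] at h1
    have h2 := stretch_pos (M γ₀) x
    exact le_of_mul_le_mul_right (by rwa [one_mul]) h2

lemma infinite_of_limitSet (hL : IsLimitSet ρ L) (hinf : L.Infinite) : Infinite Γ := by
  by_contra hfin
  rw [not_infinite_iff_finite] at hfin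
  obtain ⟨p, hp⟩ := hL.1
  have hsub := hL.2.2.2 (range fun γ => ρ γ p) ⟨_, mem_range_self 1⟩
    (finite_range _).isClosed fun g => by
      ext x
      simp only [mem_image, mem_range, exists_exists_eq_and]
      constructor
      · rintro ⟨γ, rfl⟩
        exact ⟨g * γ, by rw [map_mul]; rfl⟩
      · rintro ⟨γ, rfl⟩
        refine ⟨g⁻¹ * γ, ?_⟩
        rw [← Equiv.Perm.mul_apply, ← map_mul, mul_inv_cancel_left]
  exact hinf ((finite_range _).subset hsub)

lemma limitSet_mem_iff (hL : IsLimitSet ρ L) (γ : Γ) (x : RP1) : ρ γ x ∈ L ↔ x ∈ L := by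
  conv_lhs => rw [← hL.2.2.1 γ]
  exact (ρ γ).injective.mem_set_image

lemma limitSet_infinite (hL : IsCantorSet L) : L.Infinite := by
  obtain ⟨⟨p, hp⟩, hperf, -⟩ := hL
  exact Set.Infinite.of_accPt (hperf.acc p hp)

lemma mobiusHAct_eq {f : RP1 → RP1} (hf : IsMobius f) (z : ℍ) :
    mobiusHAct f z = hf.choose • z := by
  have hmob : ∃ M : SL2, f = mobius M := hf
  unfold mobiusHAct
  rw [dif_pos hmob]

/-- A convex cocompact group has convergence dynamics and acts cocompactly off its limit set. -/
lemma dynamics_of_convexCocompact (hcc : IsConvexCocompact ρ) (hL : IsLimitSet ρ L) :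
    IsConvergenceAction ρ L ∧ IsCocompactOff ρ L ∧ L.Nontrivial := by
  obtain ⟨-, hmob, hprop, -, hcantor, C, hCne, -, hconv, hCinv, K, hK, hCK⟩ := hcc
  have hinf := limitSet_infinite (hcantor L hL)
  have hLnt := hinf.nontrivial
  have hΓ := infinite_of_limitSet hL hinf
  have hM : ∀ γ, ⇑(ρ γ) = mobius (hmob γ).choose := fun γ => (hmob γ).choose_spec
  have hact : ∀ γ, mobiusHAct (ρ γ) = fun z => (hmob γ).choose • z :=
    fun γ => funext fun z => mobiusHAct_eq (hmob γ) z
  simp only [hact] at hprop hCinv hCK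
  have hfro := tendsto_fro_of_proper (fun γ => (hmob γ).choose) hprop
  have hLinv := limitSet_mem_iff hL
  refine ⟨?_, ?_, hLnt⟩
  · intro U hU
    obtain ⟨a, ha, r, hr, h1, h2, -, -⟩ := rep_dynamics hM hfro hL.2.1 hLinv hLnt U hU
    exact ⟨a, ha, r, hr, h1, h2⟩
  · refine isCocompactOff_of_matrices hM hfro hL hLinv hLnt hCne hconv ?_ hK ?_
    · intro γ z hz
      rw [← hCinv γ]
      exact mem_image_of_mem _ hz
    · intro z hz
      obtain ⟨γ, k, hk, h⟩ := mem_iUnion.1 (hCK hz)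
      exact ⟨γ, k, hk, h⟩

/-- Both dynamical properties pass to a conjugate by a homeomorphism fixing the limit set
pointwise. -/
lemma dynamics_conj {ρ' : Γ →* Equiv.Perm RP1} (h : RP1 ≃ₜ RP1) (hid : ∀ x ∈ L, h x = x)
    (hconj : ∀ γ x, ρ' γ x = h (ρ γ (h.symm x))) (hρ : IsConvergenceAction ρ L)
    (hco : IsCocompactOff ρ L) : IsConvergenceAction ρ' L ∧ IsCocompactOff ρ' L := by
  have hid' : ∀ x ∈ L, h.symm x = x := fun x hx => by
    rw [Homeomorph.symm_apply_eq, hid x hx]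
  have hconj' : ∀ γ x, (ρ' γ).symm x = h ((ρ γ).symm (h.symm x)) := by
    intro γ x
    rw [Equiv.symm_apply_eq, hconj]
    simp
  have hmap : ∀ (U : Ultrafilter Γ) (y : RP1), Tendsto (fun z : Γ × RP1 => (z.1, h.symm z.2))
      (↑U ×ˢ 𝓝 y) (↑U ×ˢ 𝓝 (h.symm y)) := fun U y =>
    tendsto_id.prodMap (h.symm.continuous.tendsto y)
  constructor
  · intro U hU
    obtain ⟨a, ha, r, hr, h1, h2⟩ := hρ U hU
    refine ⟨a, ha, r, hr, fun y hy => ?_, fun y hy => ?_⟩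
    · have hy' : h.symm y ≠ r := fun e => hy (by rw [← hid r hr, ← e, Homeomorph.apply_symm_apply])
      have := (h.continuous.tendsto a).comp ((h1 _ hy').comp (hmap U y))
      rw [hid a ha] at this
      exact this.congr fun z => (hconj _ _).symm
    · have hy' : h.symm y ≠ a := fun e => hy (by rw [← hid a ha, ← e, Homeomorph.apply_symm_apply])
      have := (h.continuous.tendsto r).comp ((h2 _ hy').comp (hmap U y))
      rw [hid r hr] at this
      exact this.congr fun z => (hconj' _ _).symm
  · obtain ⟨F, hF, hdisj, hcov⟩ := hco
    refine ⟨h '' F, h.isClosedMap F hF, ?_, fun x hx => ?_⟩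
    · rw [disjoint_left] at hdisj ⊢
      rintro _ ⟨x, hx, rfl⟩ hxL
      apply hdisj hx
      have e := hid' _ hxL
      rw [Homeomorph.symm_apply_apply] at e
      rwa [e]
    · obtain ⟨γ, hγ⟩ := hcov (h.symm x) fun hL => hx (by
        have e := hid _ hL
        rw [Homeomorph.apply_symm_apply] at e
        rwa [e])
      exact ⟨γ, by rw [hconj]; exact mem_image_of_mem _ hγ⟩

end Fuchsian

/-- From vertical strips to `C`: with `ρ₀` convex cocompact, `ρ₁ = h ρ₀ h⁻¹` as in the
main theorem, and `ω₂` a smooth volume form invariant at points of `(L×S¹ ∪ S¹×L) \ Δ`,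
there is a continuous volume form on the whole cylinder, invariant under `ρ₁(Γ)` and equal
to `ω₂` on `(L×S¹ ∪ S¹×L) \ Δ`. -/
theorem stmt_17 {Γ : Type*} [Group Γ] (ρ₀ ρ₁ : Γ →* Equiv.Perm RP1)
    (hcc : IsConvexCocompact ρ₀)
    (L : Set RP1) (hL : IsLimitSet ρ₀ L)
    (h : RP1 ≃ₜ RP1) (hid : ∀ x ∈ L, h x = x)
    (hconj : ∀ (γ : Γ) (x : RP1), ρ₁ γ x = h (ρ₀ γ (h.symm x)))
    (hdiff : ∀ γ : Γ, IsCircleDiffeo (⊤ : ℕ∞) (ρ₁ γ))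
    (ω₂ : RP1 → RP1 → ℝ) (hω₂ : IsVolumeForm (⊤ : ℕ∞) ω₂)
    (hinv : ∀ (γ : Γ) (x y : RP1), x ≠ y → (x ∈ L ∨ y ∈ L) →
      ω₂ (ρ₁ γ x) (ρ₁ γ y) * circleDeriv (ρ₁ γ) x * circleDeriv (ρ₁ γ) y = ω₂ x y) :
    ∃ ω : RP1 → RP1 → ℝ, IsVolumeForm 0 ω ∧ (∀ γ : Γ, PreservesForm (ρ₁ γ) ω) ∧
      ∀ x y : RP1, x ≠ y → (x ∈ L ∨ y ∈ L) → ω x y = ω₂ x y := by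
  obtain ⟨hρ, hco, hLnt⟩ := dynamics_of_convexCocompact hcc hL
  obtain ⟨hρ₁, hco₁⟩ := dynamics_conj h hid hconj hρ hco
  have hmem : ∀ y, h y ∈ L ↔ y ∈ L := by
    intro y
    constructor
    · intro hy
      have e : y = h y := h.injective (hid _ hy).symm
      rwa [e]
    · intro hy
      rwa [hid y hy]
  refine exists_invariant_form hρ₁ hco₁ (fun γ x => ?_) hL.2.1 hLnt hdiff hω₂ hinv
  rw [hconj, hmem, limitSet_mem_iff hL, ← hmem, h.apply_symm_apply]

end
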